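/- Let l ≥ 1 and let P = {P_0,…,P_{l−1}} be a partition of ω into infinite sets with min P_i < min P_j whenever i < j. For every finite Souslin measurable colouring c of 𝓔^P_∞ and every E ∈ 𝓔^P_∞, there exists F ∈ 𝓔^P_∞ with F ≤ E such that c is constant on 𝓔^P_∞ ↾ F = {F' ∈ 𝓔^P_∞ : F' ≤ F}. -/

import Mathlib

open Set

namespace DualRamsey

/-- `F` is a coarsening of `E` (written `F ≤ E` in the paper): every class of `F`
is a union of classes of `E`. -/
def Coarsens {X : Type*} (F E : Setoid X) : Prop := ∀ a b, E.r a b → F.r a b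

/-- The set of equivalence classes of a setoid. -/
def classes {X : Type*} (E : Setoid X) : Set (Set X) := {C | ∃ x, C = {y | E.r x y}}

/-- The set of minimal representatives of the classes of an equivalence relation on ℕ. -/
def minReps (E : Setoid ℕ) : Set ℕ := {n | ∀ m, E.r n m → n ≤ m}

/-- `pRep E k` is `p_k(E)`, the k-th minimal representative in increasing order. -/
noncomputable def pRep (E : Setoid ℕ) (k : ℕ) : ℕ := Nat.nth (· ∈ minReps E) k

/-- `approx n E` is the n-th approximation `r_n(E)`: `E` restricted to `{0,…,p_n(E)-1}`,
identified with its graph. -/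
noncomputable def approx (n : ℕ) (E : Setoid ℕ) : Set (ℕ × ℕ) :=
  {q | q.1 < pRep E n ∧ q.2 < pRep E n ∧ E.r q.1 q.2}

/-- Basic set `[a, E]` relative to a space `S` of equivalence relations. -/
noncomputable def basicSet (S : Set (Setoid ℕ)) (a : Set (ℕ × ℕ)) (E : ↥S) : Set ↥S :=
  {F | Coarsens F.1 E.1 ∧ ∃ n, approx n F.1 = a}

/-- The Ellentuck topology on a space `S` of equivalence relations. -/
noncomputable def ellentuckTop (S : Set (Setoid ℕ)) : TopologicalSpace ↥S :=
  TopologicalSpace.generateFrom {U | ∃ a E, U = basicSet S a E}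

def IsRamsey (S : Set (Setoid ℕ)) (X : Set ↥S) : Prop :=
  ∀ (a : Set (ℕ × ℕ)) (B : ↥S), (basicSet S a B).Nonempty →
    ∃ A ∈ basicSet S a B, basicSet S a A ⊆ X ∨ basicSet S a A ∩ X = ∅

def IsRamseyNull (S : Set (Setoid ℕ)) (X : Set ↥S) : Prop :=
  ∀ (a : Set (ℕ × ℕ)) (B : ↥S), (basicSet S a B).Nonempty →
    ∃ A ∈ basicSet S a B, basicSet S a A ∩ X = ∅

/-- The property of Baire with respect to the Ellentuck topology. -/
noncomputable def HasBP (S : Set (Setoid ℕ)) (X : Set ↥S) : Prop :=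
  ∃ O M : Set ↥S, (ellentuckTop S).IsOpen O ∧ @IsMeagre _ (ellentuckTop S) M ∧
    X = (O \ M) ∪ (M \ O)

/-- The Souslin operation applied to a scheme indexed by finite sequences of naturals. -/
def souslinOp {X : Type*} (A : List ℕ → Set X) : Set X :=
  ⋃ x : ℕ → ℕ, ⋂ n : ℕ, A ((List.range n).map x)

/-- `Y` belongs to the smallest field of sets containing all `t`-open sets and
closed under the Souslin operation. -/
def SouslinMeasurable {X : Type*} (t : TopologicalSpace X) (Y : Set X) : Prop :=
  ∀ 𝒜 : Set (Set X),
    (∀ U, t.IsOpen U → U ∈ 𝒜) →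
    (∀ A ∈ 𝒜, Aᶜ ∈ 𝒜) →
    (∀ A ∈ 𝒜, ∀ B ∈ 𝒜, A ∪ B ∈ 𝒜) →
    (∀ f : List ℕ → Set X, (∀ s, f s ∈ 𝒜) → souslinOp f ∈ 𝒜) →
    Y ∈ 𝒜

/-- The graph of an equivalence relation as a boolean-valued function. -/
noncomputable def graphMap {X : Type*} (E : Setoid X) : X × X → Bool :=
  fun q => @decide (E.r q.1 q.2) (Classical.dec _)

/-- The metrizable topology on a space of equivalence relations, as a subspace of
`2^(X × X)` via graphs. -/
noncomputable def graphTop {X : Type*} (S : Set (Setoid X)) : TopologicalSpace ↥S :=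
  TopologicalSpace.induced (fun E => graphMap E.1) inferInstance



/-- `𝓔^P_∞` for a partition `P` of ℕ into `l` infinite pieces: the `P`-alternating
equivalence relations, i.e. those with infinitely many classes whose k-th minimal
representative lies in `P (k mod l)`. -/
noncomputable def EPalt (l : ℕ) (hl : 0 < l) (P : Fin l → Set ℕ) : Set (Setoid ℕ) :=
  {E | (classes E).Infinite ∧ ∀ k : ℕ, pRep E k ∈ P ⟨k % l, Nat.mod_lt k hl⟩}

/-!
By the Carlson–Simpson theorem, the one-step extensions of a finite approximation satisfy a
pigeonhole principle: on ultrafilters over words, a minimal idempotent is the image, under every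
substitution of a letter, of an idempotent on variable words, and this yields an infinite variable
word with homogeneous instances. Since the pieces of the partition are disjoint, coarsening an
alternating relation moves a representative by a multiple of `l` classes, so the extensions of an
approximation are words whose letters record where a block of `l` classes goes.

Gluing a coarsening onto an initial part of a relation, and passing to limits of fusion sequences,
the pigeonhole principle implies by combinatorial forcing that Ellentuck open sets are Ramsey.
Ramsey null sets form a σ-ideal in the σ-algebra of Ramsey sets, and every set has a Ramsey
envelope, so Marczewski's theorem makes all Souslin measurable sets Ramsey. The colours can then be
split off one at a time.
-/

/-! ### Recursive constructions -/

theorem exists_seq_of_step {α : Type*} {p : ℕ → α → Prop} {R : ℕ → α → α → Prop} {a : α}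
    (h₀ : p 0 a) (step : ∀ n x, p n x → ∃ y, p (n + 1) y ∧ R n x y) :
    ∃ f : ℕ → α, f 0 = a ∧ (∀ n, p n (f n)) ∧ ∀ n, R n (f n) (f (n + 1)) := by
  choose g hgp hgR using step
  let f (n : ℕ) : {x // p n x} := n.rec ⟨a, h₀⟩ fun n x => ⟨g n x x.2, hgp n x x.2⟩
  exact ⟨fun n => (f n).1, rfl, fun n => (f n).2, fun n => hgR n _ (f n).2⟩

theorem exists_seq_of_isPrefix {α : Type*} {u : ℕ → List α} (hu : ∀ k, u k <+: u (k + 1))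
    (hlen : StrictMono fun k => (u k).length) :
    ∃ Z : ℕ → α, ∀ k, (List.range (u k).length).map Z = u k := by
  have hmono : ∀ {j k}, j ≤ k → u j <+: u k := fun {j k} h => by
    induction h with
    | refl => exact List.prefix_rfl
    | step _ ih => exact ih.trans (hu _)
  have hlt : ∀ i, i < (u (i + 1)).length := fun i => hlen.le_apply (x := i + 1)
  refine ⟨fun i => (u (i + 1))[i]'(hlt i), fun k => List.ext_getElem (by simp) fun i _ hi => ?_⟩
  simp only [List.getElem_map, List.getElem_range]
  rcases le_total k (i + 1) with h | h
  · exact ((hmono h).getElem hi).symm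
  · exact (hmono h).getElem (hlt i)

/-! ### Idempotents in compact right-topological semigroups -/

section CompactSemigroup

variable {M : Type*} [Semigroup M] [TopologicalSpace M] [CompactSpace M]

theorem isClosed_image_mul_right [T2Space M] (hcont : ∀ r : M, Continuous (· * r)) {L : Set M}
    (hL : IsClosed L) (r : M) : IsClosed ((· * r) '' L) :=
  (hL.isCompact.image (hcont r)).isClosed

theorem exists_minimal_closed_left_ideal [Nonempty M] :
    ∃ L : Set M, Minimal (fun L => IsClosed L ∧ L.Nonempty ∧ ∀ x, ∀ y ∈ L, x * y ∈ L) L := by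
  refine zorn_superset _ fun c hc hchain => ?_
  rcases c.eq_empty_or_nonempty with rfl | hne
  · exact ⟨univ, ⟨isClosed_univ, univ_nonempty, fun _ _ _ => mem_univ _⟩, by simp⟩
  refine ⟨⋂₀ c, ⟨isClosed_sInter fun s hs => (hc hs).1, ?_, fun x y hy s hs =>
    (hc hs).2.2 x y (hy s hs)⟩, fun s hs => sInter_subset_of_mem hs⟩
  have := hne.to_subtype
  exact IsCompact.nonempty_sInter_of_directed_nonempty_isCompact_isClosed
    (hchain.symm.directedOn (r := fun s t : Set M => s ⊇ t)) (fun s hs => (hc hs).2.1)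
    (fun s hs => (hc hs).1.isCompact) fun s hs => (hc hs).1

variable [T2Space M]

/-- In the usual order on idempotents, `e ≤ w` if and only if `w * e = e` and `e * w = e`. -/
theorem exists_minimal_idempotent [Nonempty M] (hcont : ∀ r : M, Continuous (· * r)) :
    ∃ w : M, w * w = w ∧ ∀ e, e * e = e → w * e = e → e * w = e → e = w := by
  obtain ⟨L, ⟨hcl, hne, hmul⟩, hmin⟩ := exists_minimal_closed_left_ideal (M := M)
  obtain ⟨w, hwL, hw⟩ := exists_idempotent_in_compact_subsemigroup hcont L hne hcl.isCompact
    fun x _ y hy => hmul x y hy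
  refine ⟨w, hw, fun e he hwe hew => ?_⟩
  have heL : e ∈ L := hew ▸ hmul e w hwL
  have hLe : L ⊆ (· * e) '' L := by
    refine hmin ⟨isClosed_image_mul_right hcont hcl e, ⟨_, e, heL, rfl⟩, ?_⟩ ?_
    · rintro x _ ⟨y, hy, rfl⟩
      exact ⟨x * y, hmul x y hy, mul_assoc x y e⟩
    · rintro _ ⟨y, -, rfl⟩
      exact hmul y e heL
  obtain ⟨z, -, hz⟩ := hLe hwL
  calc e = w * e := hwe.symm
    _ = z * e * e := by rw [← hz]
    _ = w := by rw [mul_assoc, he, ← hz]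

theorem exists_idempotent_le_mem_ideal (hcont : ∀ r : M, Continuous (· * r)) {K : Set M}
    (hcl : IsClosed K) (hne : K.Nonempty) (hleft : ∀ x, ∀ y ∈ K, x * y ∈ K)
    (hright : ∀ x ∈ K, ∀ y, x * y ∈ K) {w : M} (hw : w * w = w) :
    ∃ v ∈ K, v * v = v ∧ w * v = v ∧ v * w = v := by
  obtain ⟨_, ⟨u, hu, rfl⟩, hidem⟩ := exists_idempotent_in_compact_subsemigroup hcont
    ((· * w) '' K) (hne.image _) (isClosed_image_mul_right hcont hcl w).isCompact <| by
      rintro _ ⟨x, hx, rfl⟩ _ ⟨y, -, rfl⟩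
      exact ⟨x * w * y, hright _ (hright x hx w) y, by simp only [mul_assoc]⟩
  refine ⟨w * (u * w), hleft w _ (hright u hu w), ?_, ?_, ?_⟩
  · calc w * (u * w) * (w * (u * w)) = w * (u * (w * w) * (u * w)) := by
          simp only [mul_assoc]
      _ = w * (u * w) := by rw [hw, hidem]
  · rw [← mul_assoc, hw]
  · rw [mul_assoc, mul_assoc, hw]

end CompactSemigroup

/-! ### The Carlson–Simpson theorem -/

section CarlsonSimpson

attribute [local instance] Ultrafilter.mul Ultrafilter.semigroup

theorem ultrafilter_mem_mul {M : Type*} [Semigroup M] {U V : Ultrafilter M} {s : Set M} :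
    s ∈ U * V ↔ ∀ᶠ x in U, ∀ᶠ y in V, x * y ∈ s :=
  Ultrafilter.eventually_mul U V (· ∈ s)

theorem ultrafilter_map_mul {M N : Type*} [Semigroup M] [Semigroup N] (f : M →ₙ* N)
    (U V : Ultrafilter M) : (U * V).map f = U.map f * V.map f := by
  ext s
  simp only [Ultrafilter.mem_map, ultrafilter_mem_mul, mem_preimage, map_mul]
  rfl

section Semigroup

variable {Λ W V : Type*} [Semigroup W] [Semigroup V] {K : Set V}

/-- The ultrafilter on variable words is an idempotent below the image of a minimal idempotent on
constant words; substituting a letter gives an idempotent below that minimal one, hence equal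
to it. -/
theorem exists_idempotent_ultrafilters [Nonempty W] (incl : W →ₙ* V) (ev : Λ → V →ₙ* W)
    (hev : ∀ a w, ev a (incl w) = w) (hne : K.Nonempty)
    (hleft : ∀ x, ∀ y ∈ K, x * y ∈ K) (hright : ∀ x ∈ K, ∀ y, x * y ∈ K) :
    ∃ (w : Ultrafilter W) (v : Ultrafilter V), w * w = w ∧ K ∈ v ∧ ∀ a, v.map (ev a) = w := by
  obtain ⟨w, hw, hmin⟩ := exists_minimal_idempotent (M := Ultrafilter W)
    Ultrafilter.continuous_mul_left
  have hevmap : ∀ a, (w.map incl).map (ev a) = w := fun a => by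
    rw [Ultrafilter.map_map, show ev a ∘ incl = id from funext (hev a), Ultrafilter.map_id]
  obtain ⟨v, hvK, hv, hwv, hvw⟩ := exists_idempotent_le_mem_ideal (M := Ultrafilter V)
    Ultrafilter.continuous_mul_left (K := {v | K ∈ v}) (ultrafilter_isClosed_basic K)
    (let ⟨x, hx⟩ := hne; ⟨pure x, Ultrafilter.mem_pure.2 hx⟩)
    (fun x y hy => ultrafilter_mem_mul.2 (.of_forall fun p => .mono hy (hleft p)))
    (fun x hx y => ultrafilter_mem_mul.2 (.mono hx fun p hp => .of_forall (hright p hp)))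
    (w := w.map incl) (by rw [← ultrafilter_map_mul, hw])
  refine ⟨w, v, hw, hvK, fun a => hmin _ ?_ ?_ ?_⟩
  · rw [← ultrafilter_map_mul, hv]
  · conv_lhs => rw [← hevmap a, ← ultrafilter_map_mul, hwv]
  · conv_lhs => rw [← hevmap a, ← ultrafilter_map_mul, hvw]

theorem exists_extension_step [Finite Λ] (incl : W →ₙ* V) (ev : Λ → V →ₙ* W)
    (hev : ∀ a w, ev a (incl w) = w) (hne : K.Nonempty)
    (hleft : ∀ x, ∀ y ∈ K, x * y ∈ K) (hright : ∀ x ∈ K, ∀ y, x * y ∈ K)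
    (π : V → W) (C : Set W) :
    ∃ C' G : Set W, (C' = C ∨ C' = Cᶜ) ∧ G.Nonempty ∧ ∀ F ⊆ G, F.Finite →
      ∃ x ∈ K, ∀ s ∈ F, s * π x ∈ C' ∧ ∀ a, s * ev a x ∈ G := by
  have : Nonempty W := hne.to_type.map π
  obtain ⟨w, v, hw, hK, hvw⟩ := exists_idempotent_ultrafilters incl ev hev hne hleft hright
  obtain ⟨C', hC', hmem⟩ : ∃ C', (C' = C ∨ C' = Cᶜ) ∧ C' ∈ w * v.map π :=
    (Ultrafilter.mem_or_compl_mem (w * v.map π) C).elim (fun h => ⟨C, .inl rfl, h⟩)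
      fun h => ⟨Cᶜ, .inr rfl, h⟩
  let D : Set W := {s | ∀ᶠ x in v, s * π x ∈ C'}
  have hD : ∀ᶠ s in w, s ∈ D := ultrafilter_mem_mul.1 hmem
  let G : Set W := {s | s ∈ D ∧ ∀ᶠ t in w, s * t ∈ D}
  have hG : G ∈ w := hD.and (ultrafilter_mem_mul.1 (hw.symm ▸ hD))
  have hGG : ∀ s ∈ G, ∀ᶠ t in w, s * t ∈ G := by
    rintro s ⟨-, hs⟩
    have hs' : ∀ᶠ t in w, ∀ᶠ t' in w, s * (t * t') ∈ D :=
      ultrafilter_mem_mul.1 (show {t | s * t ∈ D} ∈ w * w from hw.symm ▸ hs)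
    simp only [← mul_assoc] at hs'
    exact hs.and hs'
  refine ⟨C', G, hC', Ultrafilter.nonempty_of_mem hG, fun F hFG hF => ?_⟩
  have hF' : ∀ᶠ x in v, ∀ s ∈ F, s * π x ∈ C' ∧ ∀ a, s * ev a x ∈ G :=
    (Filter.eventually_all_finite hF).2 fun s hs => (hFG hs).1.and <|
      Filter.eventually_all.2 fun a =>
        show {t | s * t ∈ G} ∈ v.map (ev a) from (hvw a).symm ▸ hGG s (hFG hs)
  exact (Filter.Eventually.and hK hF').exists

end Semigroup

theorem exists_eq_map_some_append_none {Λ : Type*} (x : List (Option Λ)) (hx : none ∈ x) :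
    ∃ (p : List Λ) (t : List (Option Λ)), x = p.map some ++ none :: t := by
  induction x with
  | nil => simp at hx
  | cons o x ih =>
    rcases o with _ | a
    · exact ⟨[], x, rfl⟩
    · obtain ⟨p, t, rfl⟩ := ih (by simpa using hx)
      exact ⟨a :: p, t, rfl⟩

variable {Λ : Type*}

theorem exists_word_extension_step [Finite Λ] (C : Set (List Λ)) :
    ∃ C' G : Set (List Λ), (C' = C ∨ C' = Cᶜ) ∧ G.Nonempty ∧ ∀ F ⊆ G, F.Finite →
      ∃ (p : List Λ) (t : List (Option Λ)),
        ∀ s ∈ F, s ++ p ∈ C' ∧ ∀ a, s ++ p ++ a :: t.map (·.getD a) ∈ G := by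
  choose! π t hπ using exists_eq_map_some_append_none (Λ := Λ)
  let incl : FreeMonoid Λ →* FreeMonoid (Option Λ) := FreeMonoid.map some
  let ev (a : Λ) : FreeMonoid (Option Λ) →* FreeMonoid Λ := FreeMonoid.map (·.getD a)
  obtain ⟨C', G, hC', hG, step⟩ := exists_extension_step (W := FreeMonoid Λ)
    (incl : _ →ₙ* _) (fun a => (ev a : _ →ₙ* _))
    (fun a w => FreeMonoid.map_map.trans (List.map_id w))
    (K := {x : FreeMonoid (Option Λ) | none ∈ x}) ⟨_, FreeMonoid.mem_of_self⟩
    (fun x y hy => FreeMonoid.mem_mul.2 (.inr hy)) (fun x hx y => FreeMonoid.mem_mul.2 (.inl hx))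
    π C
  refine ⟨C', G, hC', hG, fun F hFG hF => ?_⟩
  obtain ⟨x, hx, hxF⟩ := step F hFG hF
  refine ⟨π x, t x, fun s hs => ⟨(hxF s hs).1, fun a => ?_⟩⟩
  have h : s ++ List.map (·.getD a) x = s ++ π x ++ a :: (t x).map (·.getD a) := by
    conv_lhs => rw [hπ x hx]
    simp [Function.comp_def]
  exact h ▸ (hxF s hs).2 a

/-- `IsVariableWordIn A k z` says that `z` is a variable word over the alphabet `Λ`, the variables
being the letters `Sum.inr j`, that only the variables with `j < k` occur in it, and that all its
instances belong to the set of words `A`. -/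
def IsVariableWordIn (A : Set (List Λ)) (k : ℕ) (z : List (Λ ⊕ ℕ)) : Prop :=
  (∀ σ : ℕ → Λ, z.map (Sum.elim id σ) ∈ A) ∧ ∀ j, Sum.inr j ∈ z → j < k

theorem IsVariableWordIn.extend [Finite Λ] {C G : Set (List Λ)}
    (step : ∀ F ⊆ G, F.Finite → ∃ (p : List Λ) (t : List (Option Λ)),
      ∀ s ∈ F, s ++ p ∈ C ∧ ∀ a, s ++ p ++ a :: t.map (·.getD a) ∈ G)
    {k : ℕ} {z : List (Λ ⊕ ℕ)} (hz : IsVariableWordIn G k z) :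
    ∃ u t, IsVariableWordIn C k u ∧ z <+: u ∧ IsVariableWordIn G (k + 1) (u ++ Sum.inr k :: t) := by
  have hfin : (range fun σ : ℕ → Λ => z.map (Sum.elim id σ)).Finite :=
    (List.finite_length_eq Λ z.length).subset (range_subset_iff.2 fun σ => by simp)
  obtain ⟨p, t, hpt⟩ := step _ (range_subset_iff.2 hz.1) hfin
  rw [forall_mem_range] at hpt
  let f : Option Λ → Λ ⊕ ℕ := fun o => o.elim (Sum.inr k) Sum.inl
  have hf : ∀ σ : ℕ → Λ, Sum.elim id σ ∘ f = (·.getD (σ k)) := fun σ => by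
    ext (_ | _) <;> rfl
  refine ⟨z ++ p.map Sum.inl, t.map f, ⟨fun σ => ?_, fun j hj => ?_⟩, List.prefix_append _ _,
    fun σ => ?_, fun j hj => ?_⟩
  · simpa using (hpt σ).1
  · exact hz.2 j (by simpa using hj)
  · simpa [hf] using (hpt σ).2 (σ k)
  · have hfj : ∀ o, f o = Sum.inr j → k = j := by rintro (_ | _) <;> simp [f]
    simp only [List.append_assoc, List.mem_append, List.mem_map, reduceCtorEq, and_false,
      exists_false, List.mem_cons, Sum.inr.injEq, false_or] at hj
    rcases hj with hj | rfl | ⟨o, -, ho⟩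
    · exact (hz.2 j hj).trans_le k.le_succ
    · exact j.lt_succ_self
    · exact (hfj o ho) ▸ k.lt_succ_self

/-- The left-variable form of the Carlson–Simpson theorem: the infinite variable word `Z` starts its
`k`-th variable at `d k`. -/
theorem carlson_simpson [Finite Λ] (C : Set (List Λ)) :
    ∃ (C' : Set (List Λ)) (d : ℕ → ℕ) (Z : ℕ → Λ ⊕ ℕ), (C' = C ∨ C' = Cᶜ) ∧ StrictMono d ∧
      (∀ k, Z (d k) = Sum.inr k) ∧ (∀ k, ∀ i < d k, ∀ j, Z i = Sum.inr j → j < k) ∧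
      ∀ k (σ : ℕ → Λ), (List.range (d k)).map (fun i => Sum.elim id σ (Z i)) ∈ C' := by
  obtain ⟨C', G, hC', ⟨g, hg⟩, step⟩ := exists_word_extension_step C
  have hg₀ : IsVariableWordIn G 0 (g.map Sum.inl) := ⟨fun σ => by simpa using hg, by simp⟩
  obtain ⟨u₀, t₀, hu₀, -, ht₀⟩ := hg₀.extend step
  obtain ⟨u, -, hu, hpre⟩ := exists_seq_of_step (p := fun k u =>
      IsVariableWordIn C' k u ∧ ∃ t, IsVariableWordIn G (k + 1) (u ++ Sum.inr k :: t))
    (R := fun k u u' => u ++ [Sum.inr k] <+: u') ⟨hu₀, t₀, ht₀⟩ <| by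
      rintro k u ⟨-, t, ht⟩
      obtain ⟨u', t', hu', hpre, ht'⟩ := ht.extend step
      exact ⟨u', ⟨hu', t', ht'⟩, .trans ⟨t, by simp⟩ hpre⟩
  have hd : StrictMono fun k => (u k).length :=
    strictMono_nat_of_lt_succ fun k => by simpa [Nat.succ_le_iff] using (hpre k).length_le
  obtain ⟨Z, hZ⟩ := exists_seq_of_isPrefix (fun k => (List.prefix_append _ _).trans (hpre k)) hd
  refine ⟨C', fun k => (u k).length, Z, hC', hd, fun k => ?_, fun k i hi j hj => ?_, fun k σ => ?_⟩
  · have h := (hpre k).getElem (i := (u k).length) (by simp)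
    rw [List.getElem_of_eq (hZ (k + 1)).symm] at h
    simpa using h.symm
  · refine (hu k).1.2 j ?_
    rw [← hZ k, ← hj]
    exact List.mem_map_of_mem (List.mem_range.2 hi)
  · have h := (hu k).1.1 σ
    rwa [← hZ k, List.map_map] at h
end CarlsonSimpson

/-! ### Equivalence relations on `ℕ` -/

theorem Coarsens.refl {X : Type*} (E : Setoid X) : Coarsens E E := fun _ _ => id

theorem Coarsens.trans {X : Type*} {E F G : Setoid X} (h : Coarsens E F) (h' : Coarsens F G) :
    Coarsens E G := fun a b hab => h a b (h' a b hab)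

/-- The minimal representative of the `E`-class of `x`. -/
noncomputable def minRep (E : Setoid ℕ) (x : ℕ) : ℕ := sInf {y | E x y}

section MinRep

variable {E F : Setoid ℕ} {x y : ℕ}

theorem rel_minRep (E : Setoid ℕ) (x : ℕ) : E x (minRep E x) :=
  Nat.sInf_mem (s := {y | E x y}) ⟨x, E.refl' x⟩

theorem minRep_le_of_rel (h : E x y) : minRep E x ≤ y := Nat.sInf_le h

theorem minRep_le (E : Setoid ℕ) (x : ℕ) : minRep E x ≤ x := minRep_le_of_rel (E.refl' x)

theorem minRep_mem_minReps (E : Setoid ℕ) (x : ℕ) : minRep E x ∈ minReps E := fun _ h =>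
  minRep_le_of_rel (E.trans' (rel_minRep E x) h)

theorem minRep_eq_self_iff : minRep E x = x ↔ x ∈ minReps E :=
  ⟨fun h => h ▸ minRep_mem_minReps E x, fun h => (minRep_le E x).antisymm (h _ (rel_minRep E x))⟩

theorem rel_iff_minRep_eq : E x y ↔ minRep E x = minRep E y := by
  refine ⟨fun h => ?_, fun h => E.trans' (rel_minRep E x) (h ▸ E.symm' (rel_minRep E y))⟩
  exact (minRep_le_of_rel (E.trans' h (rel_minRep E y))).antisymm
    (minRep_le_of_rel (E.trans' (E.symm' h) (rel_minRep E x)))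

theorem Coarsens.minReps_subset (h : Coarsens F E) : minReps F ⊆ minReps E :=
  fun _ hx y hxy => hx y (h _ y hxy)

theorem mem_minReps_iff_forall_lt : x ∈ minReps E ↔ ∀ y < x, ¬ E x y :=
  forall_congr' fun _ => ⟨fun h hlt hxy => (h hxy).not_gt hlt, fun h hxy => not_lt.1 (h · hxy)⟩

theorem mem_minReps_congr {N : ℕ} (h : ∀ x < N, ∀ y < N, (E x y ↔ F x y)) (hx : x < N) :
    x ∈ minReps E ↔ x ∈ minReps F := by
  simp only [mem_minReps_iff_forall_lt]
  exact forall₂_congr fun y hy => not_congr (h x hx y (hy.trans hx))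

/-- A regressive idempotent map picks a minimal element in each of its fibres. -/
theorem minReps_ker {f : ℕ → ℕ} (hle : ∀ x, f x ≤ x) (hidem : ∀ x, f (f x) = f x) :
    minReps (Setoid.ker f) = Function.fixedPoints f := by
  ext x
  refine ⟨fun hx => (hle x).antisymm (hx _ (hidem x).symm), fun hx y hxy => ?_⟩
  calc x = f y := hx.symm.trans hxy
    _ ≤ y := hle y

theorem minReps_infinite_iff : (minReps E).Infinite ↔ (classes E).Infinite := by
  have himage : (fun x => {y | E x y}) '' minReps E = classes E := by
    refine Subset.antisymm (image_subset_iff.2 fun x _ => ⟨x, rfl⟩) ?_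
    rintro _ ⟨x, rfl⟩
    refine ⟨minRep E x, minRep_mem_minReps E x, Set.ext fun y => ?_⟩
    exact ⟨E.trans' (rel_minRep E x), E.trans' (E.symm' (rel_minRep E x))⟩
  have hinj : InjOn (fun x => {y | E x y}) (minReps E) := fun x hx y hy hxy => by
    have hrel : E x y := (Set.ext_iff.1 hxy y).2 (E.refl' y)
    exact (hx y hrel).antisymm (hy x (E.symm' hrel))
  rw [← himage, infinite_image_iff hinj]

end MinRep

section PRep

variable {E F : Setoid ℕ} {k n : ℕ}

@[simp]
theorem pRep_zero (E : Setoid ℕ) : pRep E 0 = 0 :=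
  Nat.nth_zero_of_zero (p := (· ∈ minReps E)) fun y _ => y.zero_le

theorem range_pRep (hE : (minReps E).Infinite) : range (pRep E) = minReps E :=
  Nat.range_nth_of_infinite hE

theorem pRep_strictMono (hE : (minReps E).Infinite) : StrictMono (pRep E) :=
  Nat.nth_strictMono hE

theorem pRep_mem_minReps (hE : (minReps E).Infinite) (k : ℕ) : pRep E k ∈ minReps E :=
  Nat.nth_mem_of_infinite hE k

theorem pRep_eq_of_strictMono {e : ℕ → ℕ} (he : StrictMono e) (hr : range e = minReps E) :
    pRep E = e := by
  have hE : (minReps E).Infinite := hr ▸ infinite_range_of_injective he.injective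
  exact (pRep_strictMono hE).range_inj he |>.1 ((range_pRep hE).trans hr.symm)

theorem minReps_infinite_of_strictMono_pRep (h : StrictMono (pRep E)) : (minReps E).Infinite := by
  intro hfin
  have hzero : ∀ k ≥ hfin.toFinset.card, pRep E k = 0 := fun k hk =>
    Nat.nth_of_card_le (p := (· ∈ minReps E)) hfin hk
  exact (h (Nat.lt_succ_self _)).ne ((hzero _ le_rfl).trans (hzero _ (Nat.le_succ _)).symm)

theorem Coarsens.exists_pRep_eq_add {m j : ℕ} (h : Coarsens F E) (hE : (minReps E).Infinite)
    (hF : (minReps F).Infinite) (hm : pRep F m = pRep E m) (hj : m ≤ j) :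
    ∃ k, pRep F j = pRep E (m + k) := by
  obtain ⟨i, hi⟩ : pRep F j ∈ range (pRep E) :=
    range_pRep hE ▸ h.minReps_subset (pRep_mem_minReps hF j)
  have hmi : m ≤ i := (pRep_strictMono hE).le_iff_le.1
    (hm ▸ hi ▸ (pRep_strictMono hF).monotone hj)
  obtain ⟨k, rfl⟩ := Nat.exists_eq_add_of_le hmi
  exact ⟨k, hi.symm⟩

open Classical in
/-- The index `k` for which `x` lies in the class of `pRep E k`. -/
noncomputable def classIndex (E : Setoid ℕ) (x : ℕ) : ℕ := Nat.count (· ∈ minReps E) (minRep E x)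

theorem pRep_classIndex (E : Setoid ℕ) (x : ℕ) : pRep E (classIndex E x) = minRep E x := by
  classical
  exact Nat.nth_count (minRep_mem_minReps E x)

theorem rel_iff_classIndex_eq {x y : ℕ} : E x y ↔ classIndex E x = classIndex E y := by
  rw [rel_iff_minRep_eq]
  exact ⟨fun h => by rw [classIndex, classIndex, h], fun h => by
    rw [← pRep_classIndex, h, pRep_classIndex]⟩

theorem classIndex_pRep (hE : (minReps E).Infinite) (k : ℕ) : classIndex E (pRep E k) = k := by
  classical
  rw [classIndex, minRep_eq_self_iff.2 (pRep_mem_minReps hE k)]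
  exact Nat.count_nth_of_infinite hE k

theorem rel_pRep_classIndex (E : Setoid ℕ) (x : ℕ) : E x (pRep E (classIndex E x)) :=
  pRep_classIndex E x ▸ rel_minRep E x

theorem pRep_classIndex_le (E : Setoid ℕ) (x : ℕ) : pRep E (classIndex E x) ≤ x :=
  (pRep_classIndex E x).trans_le (minRep_le E x)

theorem classIndex_lt (hE : (minReps E).Infinite) {x : ℕ} (hx : x < pRep E k) :
    classIndex E x < k :=
  (pRep_strictMono hE).lt_iff_lt.1 ((pRep_classIndex_le E x).trans_lt hx)

theorem pRep_eq_of_agree (hE : (minReps E).Infinite) {N : ℕ}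
    (h : ∀ x < N, ∀ y < N, (E x y ↔ F x y)) (hk : pRep E k < N) : pRep F k = pRep E k := by
  classical
  have hmem : pRep E k ∈ minReps F := (mem_minReps_congr h hk).1 (pRep_mem_minReps hE k)
  have hcount : Nat.count (· ∈ minReps F) (pRep E k) = k := by
    calc Nat.count (· ∈ minReps F) (pRep E k)
      _ = Nat.count (· ∈ minReps E) (pRep E k) := by
        simp only [Nat.count_eq_card_filter_range]
        congr 1
        exact Finset.filter_congr fun x hx =>
          (mem_minReps_congr h ((Finset.mem_range.1 hx).trans hk)).symm
      _ = k := Nat.count_nth_of_infinite hE k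
  calc pRep F k = pRep F (Nat.count (· ∈ minReps F) (pRep E k)) := by rw [hcount]
    _ = pRep E k := Nat.nth_count hmem

end PRep

section Approx

variable {E F : Setoid ℕ} {k n n' : ℕ}

theorem approx_eq_iff : approx n E = approx n' F ↔
    pRep E n = pRep F n' ∧ ∀ x < pRep E n, ∀ y < pRep E n, (E x y ↔ F x y) := by
  have hmem : approx n E = approx n' F ↔ ∀ x y,
      x < pRep E n ∧ y < pRep E n ∧ E x y ↔ x < pRep F n' ∧ y < pRep F n' ∧ F x y :=
    Set.ext_iff.trans Prod.forall
  refine hmem.trans ⟨fun h => ?_, fun ⟨hp, h⟩ x y => ?_⟩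
  · have hlt : ∀ x, x < pRep E n ↔ x < pRep F n' := fun x => by
      simpa [E.refl' x, F.refl' x] using h x x
    exact ⟨eq_of_forall_lt_iff hlt, fun x hx y hy => by simpa [hx, hy, ← hlt] using h x y⟩
  · rw [← hp]
    exact and_congr_right fun hx => and_congr_right fun hy => h x hx y hy

@[simp]
theorem approx_zero (E : Setoid ℕ) : approx 0 E = ∅ := by
  ext
  simp [approx]

theorem pRep_eq_of_approx_eq_of_lt (hE : (minReps E).Infinite)
    (h : approx n E = approx n' F) (hk : k < n) : pRep F k = pRep E k :=
  pRep_eq_of_agree hE (approx_eq_iff.1 h).2 (pRep_strictMono hE hk)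

theorem length_eq_of_approx_eq (hE : (minReps E).Infinite) (hF : (minReps F).Infinite)
    (h : approx n E = approx n' F) : n = n' := by
  have hp : pRep E n = pRep F n' := (approx_eq_iff.1 h).1
  rcases lt_trichotomy n n' with hlt | rfl | hlt
  · have hn : pRep E n = pRep F n := pRep_eq_of_approx_eq_of_lt hF h.symm hlt
    exact absurd (hn.symm.trans hp) (pRep_strictMono hF hlt).ne
  · rfl
  · have hn : pRep F n' = pRep E n' := pRep_eq_of_approx_eq_of_lt hE h hlt
    exact absurd (hn.symm.trans hp.symm) (pRep_strictMono hE hlt).ne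

theorem approx_eq_of_approx_eq_of_le (hE : (minReps E).Infinite)
    (h : approx n E = approx n F) (hk : k ≤ n) : approx k E = approx k F := by
  rcases hk.eq_or_lt with rfl | hk
  · exact h
  have hlt : pRep E k < pRep E n := pRep_strictMono hE hk
  exact approx_eq_iff.2 ⟨(pRep_eq_of_approx_eq_of_lt hE h hk).symm, fun x hx y hy =>
    (approx_eq_iff.1 h).2 x (hx.trans hlt) y (hy.trans hlt)⟩

/-- The limit of a fusion sequence relates two points as soon as some member of the sequence
does. -/
theorem exists_fusion_limit {B : ℕ → Setoid ℕ} {m : ℕ} (hinf : ∀ k, (minReps (B k)).Infinite)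
    (hB : ∀ k, Coarsens (B (k + 1)) (B k))
    (happrox : ∀ k, approx (m + k) (B (k + 1)) = approx (m + k) (B k)) :
    ∃ A : Setoid ℕ, (minReps A).Infinite ∧ (∀ k, Coarsens A (B k)) ∧
      ∀ k, approx (m + k) A = approx (m + k) (B k) := by
  have hmono : ∀ {i j}, i ≤ j → Coarsens (B j) (B i) ∧
      approx (m + i) (B j) = approx (m + i) (B i) := fun {i j} hij => by
    induction hij with
    | refl => exact ⟨.refl _, rfl⟩
    | @step j hij ih => exact ⟨(hB j).trans ih.1, (approx_eq_of_approx_eq_of_le (hinf _)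
        (happrox j) (by lia)).trans ih.2⟩
  have hchain : ∀ i j {x y}, B i x y → B (max i j) x y := fun i j {x y} =>
    (hmono (le_max_left i j)).1 x y
  let A : Setoid ℕ :=
    { r x y := ∃ k, B k x y
      iseqv := ⟨fun x => ⟨0, (B 0).refl' x⟩, fun ⟨k, h⟩ => ⟨k, (B k).symm' h⟩,
        fun ⟨i, h⟩ ⟨j, h'⟩ => ⟨max i j, (B _).trans' (hchain i j h)
          (max_comm i j ▸ hchain j i h')⟩⟩ }
  have hagree : ∀ k, ∀ x < pRep (B k) (m + k), ∀ y < pRep (B k) (m + k), (B k x y ↔ A x y) := by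
    refine fun k x hx y hy => ⟨fun h => ⟨k, h⟩, fun ⟨j, h⟩ => ?_⟩
    exact ((approx_eq_iff.1 (hmono (le_max_right j k)).2.symm).2 x hx y hy).2 (hchain j k h)
  have hlt : ∀ k, pRep (B (k + 1)) (m + k) < pRep (B (k + 1)) (m + (k + 1)) := fun k =>
    pRep_strictMono (hinf (k + 1)) (by lia)
  have hA : (minReps A).Infinite := infinite_of_not_bddAbove fun ⟨b, hb⟩ => by
    have hmem : pRep (B (b + 2)) (m + (b + 1)) ∈ minReps A :=
      (mem_minReps_congr (hagree (b + 2)) (hlt (b + 1))).1 (pRep_mem_minReps (hinf _) _)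
    have hle : m + (b + 1) ≤ pRep (B (b + 2)) (m + (b + 1)) := (pRep_strictMono (hinf _)).le_apply
    have := hb hmem
    lia
  refine ⟨A, hA, fun k x y h => ⟨k, h⟩, fun k => (approx_eq_iff.2 ⟨?_, hagree k⟩).symm⟩
  calc pRep (B k) (m + k) = pRep (B (k + 1)) (m + k) := (approx_eq_iff.1 (happrox k)).1.symm
    _ = pRep A (m + k) := (pRep_eq_of_agree (hinf _) (hagree (k + 1)) (hlt k)).symm

end Approx

/-! ### Ramsey spaces of equivalence relations -/

section BasicSet

variable {S : Set (Setoid ℕ)} {a : Set (ℕ × ℕ)} {A B : ↥S} {k n : ℕ}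

theorem basicSet_mono (h : Coarsens A.1 B.1) : basicSet S a A ⊆ basicSet S a B :=
  fun _ hC => ⟨hC.1.trans h, hC.2⟩

theorem self_mem_basicSet (n : ℕ) (A : ↥S) : A ∈ basicSet S (approx n A.1) A := ⟨.refl _, n, rfl⟩

theorem mem_basicSet_self (h : A ∈ basicSet S a B) : A ∈ basicSet S a A := ⟨.refl _, h.2⟩

theorem basicSet_approx_zero (B : ↥S) : basicSet S (approx 0 B.1) B = {F | Coarsens F.1 B.1} :=
  Set.ext fun F => and_iff_left ⟨0, by simp⟩

end BasicSet

/-- The hypotheses on a space `S` of equivalence relations from which the abstract Ellentuck theorem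
follows: `S` is closed under limits, a coarsening `A` of `B` can be followed beyond a common
representative without changing `B` before it, and the one-step extensions of an approximation
satisfy the pigeonhole principle. -/
structure IsRamseySpace (S : Set (Setoid ℕ)) : Prop where
  minReps_infinite : ∀ E ∈ S, (minReps E).Infinite
  mem_of_approx : ∀ A, (minReps A).Infinite → (∀ k, ∃ E ∈ S, approx k A = approx k E) → A ∈ S
  amalgamation : ∀ (A B : ↥S) (m n : ℕ), Coarsens A.1 B.1 → pRep A.1 m = pRep B.1 n →
    ∃ A' : ↥S, Coarsens A'.1 B.1 ∧ approx n A'.1 = approx n B.1 ∧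
      basicSet S (approx m A.1) A' ⊆ basicSet S (approx m A.1) A
  pigeonhole : ∀ (B : ↥S) (j : ℕ) (O : Set (Set (ℕ × ℕ))), ∃ A ∈ basicSet S (approx j B.1) B,
    (∀ C ∈ basicSet S (approx j B.1) A, approx (j + 1) C.1 ∈ O) ∨
      ∀ C ∈ basicSet S (approx j B.1) A, approx (j + 1) C.1 ∉ O

namespace IsRamseySpace

variable {S : Set (Setoid ℕ)} {A B : ↥S} {k m n : ℕ}

theorem mem_basicSet_approx (hS : IsRamseySpace S) {C : ↥S} :
    C ∈ basicSet S (approx m B.1) A ↔ Coarsens C.1 A.1 ∧ approx m C.1 = approx m B.1 := by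
  refine and_congr_right fun _ => ⟨fun ⟨n, h⟩ => ?_, fun h => ⟨m, h⟩⟩
  obtain rfl :=
    length_eq_of_approx_eq (hS.minReps_infinite C.1 C.2) (hS.minReps_infinite B.1 B.2) h
  exact h

theorem basicSet_approx_anti (hS : IsRamseySpace S) (h : k ≤ n) :
    basicSet S (approx n A.1) B ⊆ basicSet S (approx k A.1) B := fun C hC => by
  obtain ⟨hCB, hCA⟩ := hS.mem_basicSet_approx.1 hC
  exact ⟨hCB, k, approx_eq_of_approx_eq_of_le (hS.minReps_infinite C.1 C.2) hCA h⟩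

section Fusion

variable {D : ℕ → Set (ℕ × ℕ) → ↥S → Prop} {B₀ : ↥S}

theorem exists_forall_mem_finset (hS : IsRamseySpace S)
    (hD : ∀ j a A A', basicSet S a A' ⊆ basicSet S a A → D j a A → D j a A')
    (hdense : ∀ B : ↥S, Coarsens B.1 B₀.1 → ∀ j,
      ∃ A ∈ basicSet S (approx j B.1) B, D j (approx j B.1) A)
    (hB : Coarsens B.1 B₀.1) (n : ℕ) (T : Finset (ℕ × Set (ℕ × ℕ))) :
    ∃ A ∈ basicSet S (approx n B.1) B, ∀ C : ↥S, Coarsens C.1 A.1 → ∀ j,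
      pRep C.1 j = pRep A.1 n → (j, approx j C.1) ∈ T → D j (approx j C.1) A := by
  classical
  induction T using Finset.induction_on with
  | empty => exact ⟨B, self_mem_basicSet n B, by simp⟩
  | insert t T _ ih =>
    obtain ⟨A, hA, hAT⟩ := ih
    by_cases hC : ∃ C : ↥S, Coarsens C.1 A.1 ∧ pRep C.1 t.1 = pRep A.1 n ∧ approx t.1 C.1 = t.2
    · obtain ⟨C, hCA, hp, hCt⟩ := hC
      obtain ⟨F, hF, hDF⟩ := hdense C (hCA.trans (hA.1.trans hB)) t.1
      obtain ⟨hFC, hFa⟩ := hS.mem_basicSet_approx.1 hF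
      obtain ⟨A', hA'A, hA', hsub⟩ :=
        hS.amalgamation F A t.1 n (hFC.trans hCA) ((approx_eq_iff.1 hFa).1.trans hp)
      rw [hFa, hCt] at hsub
      rw [hCt] at hDF
      refine ⟨A', hS.mem_basicSet_approx.2
        ⟨hA'A.trans hA.1, hA'.trans (hS.mem_basicSet_approx.1 hA).2⟩, fun G hG j hj hmem => ?_⟩
      rcases Finset.mem_insert.1 hmem with rfl | hmem
      · exact hD _ _ _ _ hsub hDF
      · exact hD _ _ _ _ (basicSet_mono hA'A)
          (hAT G (hG.trans hA'A) j (hj.trans (approx_eq_iff.1 hA').1) hmem)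
    · refine ⟨A, hA, fun G hG j hj hmem => ?_⟩
      rcases Finset.mem_insert.1 hmem with rfl | hmem
      · exact absurd ⟨G, hG, hj, rfl⟩ hC
      · exact hAT G hG j hj hmem

theorem exists_forall_pRep_eq (hS : IsRamseySpace S)
    (hD : ∀ j a A A', basicSet S a A' ⊆ basicSet S a A → D j a A → D j a A')
    (hdense : ∀ B : ↥S, Coarsens B.1 B₀.1 → ∀ j,
      ∃ A ∈ basicSet S (approx j B.1) B, D j (approx j B.1) A)
    (hB : Coarsens B.1 B₀.1) (n : ℕ) :
    ∃ A ∈ basicSet S (approx n B.1) B, ∀ C : ↥S, Coarsens C.1 A.1 → ∀ j,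
      pRep C.1 j = pRep A.1 n → D j (approx j C.1) A := by
  let N := pRep B.1 n
  have hfin : (Iic N ×ˢ 𝒫 (Iio N ×ˢ Iio N)).Finite :=
    (finite_Iic N).prod ((finite_Iio N).prod (finite_Iio N)).finite_subsets
  obtain ⟨A, hA, h⟩ := hS.exists_forall_mem_finset hD hdense hB n hfin.toFinset
  have hAN : pRep A.1 n = N := (approx_eq_iff.1 (hS.mem_basicSet_approx.1 hA).2).1
  refine ⟨A, hA, fun C hC j hj => h C hC j hj (hfin.mem_toFinset.2 ⟨?_, fun q hq => ?_⟩)⟩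
  · calc j ≤ pRep C.1 j := (pRep_strictMono (hS.minReps_infinite C.1 C.2)).le_apply
      _ = N := hj.trans hAN
  · rw [← hAN, ← hj]
    exact ⟨hq.1, hq.2.1⟩

theorem exists_fusion (hS : IsRamseySpace S)
    (hD : ∀ j a A A', basicSet S a A' ⊆ basicSet S a A → D j a A → D j a A')
    (hdense : ∀ B : ↥S, Coarsens B.1 B₀.1 → ∀ j,
      ∃ A ∈ basicSet S (approx j B.1) B, D j (approx j B.1) A) (m : ℕ) :
    ∃ A ∈ basicSet S (approx m B₀.1) B₀,
      ∀ C ∈ basicSet S (approx m B₀.1) A, ∀ j ≥ m, D j (approx j C.1) A := by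
  obtain ⟨f, rfl, -, hf⟩ := exists_seq_of_step (a := B₀) (p := fun _ B => Coarsens B.1 B₀.1)
    (R := fun k B A => A ∈ basicSet S (approx (m + k) B.1) B ∧ ∀ C : ↥S, Coarsens C.1 A.1 →
      ∀ j, pRep C.1 j = pRep A.1 (m + k) → D j (approx j C.1) A) (.refl _) fun k B hB => by
    obtain ⟨A, hA, h⟩ := hS.exists_forall_pRep_eq hD hdense hB (m + k)
    exact ⟨A, hA.1.trans hB, hA, h⟩
  have happrox : ∀ k, approx (m + k) (f (k + 1)).1 = approx (m + k) (f k).1 := fun k =>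
    (hS.mem_basicSet_approx.1 (hf k).1).2
  obtain ⟨A, hAinf, hAf, hA⟩ := exists_fusion_limit
    (fun k => hS.minReps_infinite (f k).1 (f k).2) (fun k => (hf k).1.1) happrox
  have hAS : A ∈ S := hS.mem_of_approx A hAinf fun k =>
    ⟨f k, (f k).2, approx_eq_of_approx_eq_of_le hAinf (hA k) (by lia)⟩
  have hAm : (⟨A, hAS⟩ : ↥S) ∈ basicSet S (approx m (f 0).1) (f 0) := ⟨hAf 0, m, hA 0⟩
  refine ⟨⟨A, hAS⟩, hAm, fun C hC j hj => ?_⟩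
  obtain ⟨hCA, hCm⟩ := hS.mem_basicSet_approx.1 hC
  obtain ⟨k, hk⟩ := hCA.exists_pRep_eq_add hAinf (hS.minReps_infinite C.1 C.2)
    (approx_eq_iff.1 (hCm.trans (hA 0).symm)).1 hj
  refine hD _ _ _ _ (basicSet_mono (hAf (k + 1))) ((hf k).2 C (hCA.trans (hAf (k + 1))) j ?_)
  calc pRep C.1 j = pRep (f k).1 (m + k) := hk.trans (approx_eq_iff.1 (hA k)).1
    _ = pRep (f (k + 1)).1 (m + k) := (approx_eq_iff.1 (happrox k)).1.symm

end Fusion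

/-- Combinatorial forcing: `X` meets `[a, C]` for every `C ∈ [a, A]`. -/
def Rejects (X : Set ↥S) (a : Set (ℕ × ℕ)) (A : ↥S) : Prop :=
  ∀ C ∈ basicSet S a A, ¬Disjoint (basicSet S a C) X

theorem exists_disjoint_or_rejects (hS : IsRamseySpace S) (X : Set ↥S) (B : ↥S) (m : ℕ) :
    ∃ A ∈ basicSet S (approx m B.1) B, ∀ C ∈ basicSet S (approx m B.1) A, ∀ j ≥ m,
      Disjoint (basicSet S (approx j C.1) A) X ∨ Rejects X (approx j C.1) A := by
  refine hS.exists_fusion (D := fun _ a A => Disjoint (basicSet S a A) X ∨ Rejects X a A)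
    (fun _ _ _ _ hsub => Or.imp (·.mono_left hsub) fun h C hC => h C (hsub hC))
    (fun B _ j => ?_) m
  by_cases h : Rejects X (approx j B.1) B
  · exact ⟨B, self_mem_basicSet j B, .inr h⟩
  · obtain ⟨A, hA, hdisj⟩ : ∃ A ∈ basicSet S (approx j B.1) B,
        Disjoint (basicSet S (approx j B.1) A) X := by simpa [Rejects] using h
    exact ⟨A, hA, .inl hdisj⟩

theorem Rejects.exists_forall_succ (hS : IsRamseySpace S) {X : Set ↥S} (hBA : Coarsens B.1 A.1)
    (hrej : Rejects X (approx m B.1) A) : ∃ C ∈ basicSet S (approx m B.1) B,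
      ∀ F ∈ basicSet S (approx m B.1) C, ¬Disjoint (basicSet S (approx (m + 1) F.1) A) X := by
  obtain ⟨C, hC, h | h⟩ := hS.pigeonhole B m {a | Disjoint (basicSet S a A) X}
  · have hdisj : Disjoint (basicSet S (approx m B.1) C) X := disjoint_left.2 fun F hF =>
      disjoint_left.1 (h F hF) ⟨hF.1.trans (hC.1.trans hBA), m + 1, rfl⟩
    exact absurd hdisj (hrej C (basicSet_mono hBA hC))
  · exact ⟨C, hC, h⟩

theorem exists_disjoint_or_forall_not_disjoint (hS : IsRamseySpace S) (X : Set ↥S) (B : ↥S)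
    (m : ℕ) : ∃ A ∈ basicSet S (approx m B.1) B, Disjoint (basicSet S (approx m B.1) A) X ∨
      ∀ C ∈ basicSet S (approx m B.1) A, ∀ j ≥ m,
        ¬Disjoint (basicSet S (approx j C.1) C) X := by
  obtain ⟨A, hA, hdec⟩ := hS.exists_disjoint_or_rejects X B m
  have hAm := (hS.mem_basicSet_approx.1 hA).2
  have hdecm := hdec A (mem_basicSet_self hA) m le_rfl
  rw [hAm] at hdecm
  refine hdecm.elim (fun h => ⟨A, hA, .inl h⟩) fun hrej => ?_
  obtain ⟨A', hA', hsucc⟩ := hS.exists_fusion (B₀ := A)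
    (D := fun j a A' => Rejects X a A → ∀ F ∈ basicSet S a A',
      ¬Disjoint (basicSet S (approx (j + 1) F.1) A) X)
    (fun j a A₁ A₂ hsub h hrej F hF => h hrej F (hsub hF)) (fun B' hB' j => by
      by_cases hrej : Rejects X (approx j B'.1) A
      · obtain ⟨C, hC, h⟩ := hrej.exists_forall_succ hS hB'
        exact ⟨C, hC, fun _ => h⟩
      · exact ⟨B', self_mem_basicSet j B', fun h => absurd h hrej⟩) m
  rw [hAm] at hA' hsucc
  refine ⟨A', ⟨hA'.1.trans hA.1, hA'.2⟩, .inr fun C hC j hj => ?_⟩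
  suffices hrejC : Rejects X (approx j C.1) A from
    hrejC C ⟨hC.1.trans hA'.1, j, rfl⟩
  induction j, hj using Nat.le_induction with
  | base => rwa [(hS.mem_basicSet_approx.1 hC).2]
  | succ j hj ih =>
    exact (hdec C (basicSet_mono hA'.1 hC) (j + 1) (by lia)).resolve_left
      (hsucc C hC j hj ih C ⟨hC.1, j, rfl⟩)

end IsRamseySpace

/-! ### Ramsey sets and Ramsey null sets -/

section Ramsey

variable {S : Set (Setoid ℕ)} {X Y : Set ↥S}

theorem isRamsey_iff : IsRamsey S X ↔ ∀ a B, B ∈ basicSet S a B →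
    ∃ A ∈ basicSet S a B, basicSet S a A ⊆ X ∨ Disjoint (basicSet S a A) X := by
  simp only [IsRamsey, ← disjoint_iff_inter_eq_empty]
  refine ⟨fun h a B hB => h a B ⟨B, hB⟩, fun h a B ⟨B', hB'⟩ => ?_⟩
  obtain ⟨A, hA, hAX⟩ := h a B' (mem_basicSet_self hB')
  exact ⟨A, basicSet_mono hB'.1 hA, hAX⟩

theorem isRamseyNull_iff : IsRamseyNull S X ↔ ∀ a B, B ∈ basicSet S a B →
    ∃ A ∈ basicSet S a B, Disjoint (basicSet S a A) X := by
  simp only [IsRamseyNull, ← disjoint_iff_inter_eq_empty]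
  refine ⟨fun h a B hB => h a B ⟨B, hB⟩, fun h a B ⟨B', hB'⟩ => ?_⟩
  obtain ⟨A, hA, hAX⟩ := h a B' (mem_basicSet_self hB')
  exact ⟨A, basicSet_mono hB'.1 hA, hAX⟩

theorem IsRamsey.compl (hX : IsRamsey S X) : IsRamsey S Xᶜ := by
  refine isRamsey_iff.2 fun a B hB => ?_
  obtain ⟨A, hA, h⟩ := isRamsey_iff.1 hX a B hB
  exact ⟨A, hA, h.symm.imp subset_compl_iff_disjoint_right.2 disjoint_compl_right_iff_subset.2⟩

theorem IsRamsey.union (hX : IsRamsey S X) (hY : IsRamsey S Y) : IsRamsey S (X ∪ Y) := by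
  refine isRamsey_iff.2 fun a B hB => ?_
  obtain ⟨A, hA, h | hAX⟩ := isRamsey_iff.1 hX a B hB
  · exact ⟨A, hA, .inl (h.trans subset_union_left)⟩
  obtain ⟨A', hA', h⟩ := isRamsey_iff.1 hY a A (mem_basicSet_self hA)
  exact ⟨A', basicSet_mono hA.1 hA', h.imp (·.trans subset_union_right)
    fun hAY => disjoint_union_right.2 ⟨hAX.mono_left (basicSet_mono hA'.1), hAY⟩⟩

theorem IsRamseyNull.mono (hY : IsRamseyNull S Y) (hXY : X ⊆ Y) : IsRamseyNull S X := by
  refine isRamseyNull_iff.2 fun a B hB => ?_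
  obtain ⟨A, hA, h⟩ := isRamseyNull_iff.1 hY a B hB
  exact ⟨A, hA, h.mono_right hXY⟩

theorem isRamseyNull_empty : IsRamseyNull S ∅ :=
  isRamseyNull_iff.2 fun _ B hB => ⟨B, hB, disjoint_empty _⟩

theorem IsRamseyNull.isRamsey (hX : IsRamseyNull S X) : IsRamsey S X := by
  refine isRamsey_iff.2 fun a B hB => ?_
  obtain ⟨A, hA, h⟩ := isRamseyNull_iff.1 hX a B hB
  exact ⟨A, hA, .inr h⟩

noncomputable local instance : TopologicalSpace ↥S := ellentuckTop S

theorem isOpen_basicSet (a : Set (ℕ × ℕ)) (A : ↥S) : IsOpen (basicSet S a A) :=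
  .basic _ ⟨a, A, rfl⟩

theorem IsRamsey.isRamseyNull_diff_interior (hX : IsRamsey S X) :
    IsRamseyNull S (X \ interior X) := by
  refine isRamseyNull_iff.2 fun a B hB => ?_
  obtain ⟨A, hA, h | h⟩ := isRamsey_iff.1 hX a B hB
  · exact ⟨A, hA, disjoint_sdiff_right.mono_left (interior_maximal h (isOpen_basicSet a A))⟩
  · exact ⟨A, hA, h.mono_right sdiff_subset⟩

theorem exists_forall_lt_disjoint_basicSet {X : ℕ → Set ↥S} (hX : ∀ i, IsRamseyNull S (X i))
    {a : Set (ℕ × ℕ)} {B : ↥S} (hB : B ∈ basicSet S a B) (n : ℕ) :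
    ∃ A ∈ basicSet S a B, ∀ i < n, Disjoint (basicSet S a A) (X i) := by
  induction n with
  | zero => exact ⟨B, hB, by simp⟩
  | succ n ih =>
    obtain ⟨A, hA, h⟩ := ih
    obtain ⟨A', hA', h'⟩ := isRamseyNull_iff.1 (hX n) a A (mem_basicSet_self hA)
    refine ⟨A', basicSet_mono hA.1 hA', fun i hi => ?_⟩
    rcases Nat.lt_succ_iff_lt_or_eq.1 hi with hi | rfl
    · exact (h i hi).mono_left (basicSet_mono hA'.1)
    · exact h'

namespace IsRamseySpace

theorem isRamseyNull_iUnion (hS : IsRamseySpace S) {X : ℕ → Set ↥S}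
    (hX : ∀ i, IsRamseyNull S (X i)) : IsRamseyNull S (⋃ i, X i) := by
  rw [isRamseyNull_iff]
  rintro _ B ⟨-, m, rfl⟩
  obtain ⟨A, hA, h⟩ := hS.exists_fusion (B₀ := B)
    (D := fun j a A => ∀ i < j + 1, Disjoint (basicSet S a A) (X i))
    (fun _ _ _ _ hsub h i hi => (h i hi).mono_left hsub)
    (fun B' _ j => exists_forall_lt_disjoint_basicSet hX (self_mem_basicSet j B') (j + 1)) m
  refine ⟨A, hA, disjoint_iUnion_right.2 fun i => disjoint_left.2 fun C hC => ?_⟩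
  exact disjoint_left.1 (h C hC (max m i) (le_max_left m i) i (by lia)) ⟨hC.1, _, rfl⟩

theorem exists_basicSet_subset_of_isOpen (hS : IsRamseySpace S) {U : Set ↥S} (hU : IsOpen U)
    {C : ↥S} (hC : C ∈ U) : ∃ n, basicSet S (approx n C.1) C ⊆ U := by
  induction hU with
  | basic s hs =>
    obtain ⟨a, E, rfl⟩ := hs
    obtain ⟨hCE, n, rfl⟩ := hC
    exact ⟨n, basicSet_mono hCE⟩
  | univ => exact ⟨0, subset_univ _⟩
  | inter s t _ _ ihs iht =>
    obtain ⟨n, hn⟩ := ihs hC.1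
    obtain ⟨k, hk⟩ := iht hC.2
    exact ⟨max n k, subset_inter ((hS.basicSet_approx_anti (le_max_left n k)).trans hn)
      ((hS.basicSet_approx_anti (le_max_right n k)).trans hk)⟩
  | sUnion T _ ih =>
    obtain ⟨s, hs, hCs⟩ := hC
    obtain ⟨n, hn⟩ := ih s hs hCs
    exact ⟨n, hn.trans (subset_sUnion_of_mem hs)⟩

theorem isRamsey_of_isOpen (hS : IsRamseySpace S) {U : Set ↥S} (hU : IsOpen U) :
    IsRamsey S U := by
  rw [isRamsey_iff]
  rintro _ B ⟨-, m, rfl⟩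
  obtain ⟨A, hA, h | h⟩ := hS.exists_disjoint_or_forall_not_disjoint Uᶜ B m
  · exact ⟨A, hA, .inl (disjoint_compl_right_iff_subset.1 h)⟩
  refine ⟨A, hA, .inr (disjoint_left.2 fun C hC hCU => ?_)⟩
  obtain ⟨n, hn⟩ := hS.exists_basicSet_subset_of_isOpen hU hCU
  exact h C hC (max m n) (le_max_left m n) (disjoint_compl_right_iff_subset.2
    ((hS.basicSet_approx_anti (le_max_right m n)).trans hn))

theorem isRamsey_iUnion (hS : IsRamseySpace S) {X : ℕ → Set ↥S} (hX : ∀ i, IsRamsey S (X i)) :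
    IsRamsey S (⋃ i, X i) := by
  have heq : ⋃ i, X i = (⋃ i, interior (X i)) ∪ ⋃ i, X i \ interior (X i) := by
    simp only [← iUnion_union_distrib, union_sdiff_cancel interior_subset]
  rw [heq]
  exact (hS.isRamsey_of_isOpen (isOpen_iUnion fun i => isOpen_interior)).union
    (hS.isRamseyNull_iUnion fun i => (hX i).isRamseyNull_diff_interior).isRamsey

/-- The analogue of the Banach category theorem. -/
theorem isRamseyNull_of_locally (hS : IsRamseySpace S)
    (hY : ∀ C ∈ Y, ∃ U, IsOpen U ∧ C ∈ U ∧ IsRamseyNull S (U ∩ Y)) : IsRamseyNull S Y := by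
  rw [isRamseyNull_iff]
  rintro _ B ⟨-, m, rfl⟩
  obtain ⟨A, hA, h | h⟩ := hS.exists_disjoint_or_forall_not_disjoint Y B m
  · exact ⟨A, hA, h⟩
  have hAm := (hS.mem_basicSet_approx.1 hA).2
  obtain ⟨G, hG, hGY⟩ := not_disjoint_iff.1 (h A (mem_basicSet_self hA) m le_rfl)
  rw [hAm] at hG
  obtain ⟨U, hU, hGU, hnull⟩ := hY G hGY
  obtain ⟨n, hn⟩ := hS.exists_basicSet_subset_of_isOpen hU hGU
  obtain ⟨A', hA', hdisj⟩ := isRamseyNull_iff.1 hnull _ G (self_mem_basicSet (max m n) G)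
  have hGm := (hS.mem_basicSet_approx.1 hG).2
  have hA'A : A' ∈ basicSet S (approx m B.1) A :=
    hGm ▸ basicSet_mono hG.1 (hS.basicSet_approx_anti (le_max_left m n) hA')
  refine absurd ?_ (h A' hA'A (max m n) (le_max_left m n))
  rw [(hS.mem_basicSet_approx.1 hA').2]
  have hsub : basicSet S (approx (max m n) G.1) A' ⊆ U := (basicSet_mono hA'.1).trans
    ((hS.basicSet_approx_anti (le_max_right m n)).trans hn)
  exact disjoint_left.2 fun C hC hCY => disjoint_left.1 hdisj hC ⟨hsub hC, hCY⟩

theorem exists_isRamsey_envelope (hS : IsRamseySpace S) (X : Set ↥S) :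
    ∃ Φ, IsRamsey S Φ ∧ X ⊆ Φ ∧ ∀ Y, IsRamsey S Y → Y ⊆ Φ \ X → IsRamseyNull S Y := by
  let O := ⋃₀ {s | IsOpen s ∧ IsRamseyNull S (s ∩ X)}
  have hO : IsOpen O := isOpen_sUnion fun s hs => hs.1
  have hnull : IsRamseyNull S (O ∩ X) := hS.isRamseyNull_of_locally fun C ⟨⟨s, hs, hCs⟩, _⟩ =>
    ⟨s, hs.1, hCs, hs.2.mono (inter_subset_inter_right s inter_subset_right)⟩
  refine ⟨Oᶜ ∪ (O ∩ X), (hS.isRamsey_of_isOpen hO).compl.union hnull.isRamsey,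
    fun C hC => or_iff_not_imp_left.2 fun h => ⟨not_not.1 h, hC⟩,
    fun Y hY hYX => isRamseyNull_iff.2 fun a B hB => ?_⟩
  obtain ⟨A, hA, hAY | hAY⟩ := isRamsey_iff.1 hY a B hB
  · have hAX : basicSet S a A ∩ X = ∅ :=
      (disjoint_left.2 fun C hC => (hYX (hAY hC)).2).inter_eq
    have hAO : basicSet S a A ⊆ O :=
      subset_sUnion_of_mem ⟨isOpen_basicSet a A, hAX ▸ isRamseyNull_empty⟩
    have hAA := mem_basicSet_self hA
    obtain ⟨hAO' | hAX', hnot⟩ := hYX (hAY hAA)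
    · exact absurd (hAO hAA) hAO'
    · exact absurd hAX'.2 hnot
  · exact ⟨A, hA, hAY⟩

end IsRamseySpace

end Ramsey

/-! ### The Souslin operation -/

section Souslin

variable {X : Type*} {f : List ℕ → Set X}

/-- The part of `souslinOp f` contributed by the branches extending `s`. -/
def souslinSection (f : List ℕ → Set X) (s : List ℕ) : Set X :=
  {x | ∃ y : ℕ → ℕ, (List.range s.length).map y = s ∧ ∀ n, x ∈ f ((List.range n).map y)}

theorem souslinSection_nil (f : List ℕ → Set X) : souslinSection f [] = souslinOp f := by
  ext
  simp [souslinSection, souslinOp]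

theorem souslinSection_subset (f : List ℕ → Set X) (s : List ℕ) : souslinSection f s ⊆ f s :=
  fun _ ⟨_, hy, h⟩ => hy ▸ h s.length

theorem souslinSection_subset_iUnion (f : List ℕ → Set X) (s : List ℕ) :
    souslinSection f s ⊆ ⋃ n, souslinSection f (s ++ [n]) := fun _ ⟨y, hy, h⟩ =>
  mem_iUnion.2 ⟨y s.length, y, by simp [List.range_succ, hy], h⟩

theorem diff_souslinOp_subset {Φ : List ℕ → Set X} (hΦ : ∀ s, Φ s ⊆ f s) :
    Φ [] \ souslinOp f ⊆ ⋃ s, Φ s \ ⋃ n, Φ (s ++ [n]) := by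
  rintro x ⟨hx, hxf⟩
  by_contra hcon
  have hstep : ∀ s, x ∈ Φ s → ∃ n, x ∈ Φ (s ++ [n]) := by simpa using hcon
  obtain ⟨u, hu₀, hΦu, hu⟩ := exists_seq_of_step (p := fun _ s => x ∈ Φ s)
    (R := fun _ s t => ∃ n : ℕ, t = s ++ [n]) hx fun _ s hs =>
      (hstep s hs).imp' (s ++ [·]) fun n hn => ⟨hn, n, rfl⟩
  have hlen : ∀ k, (u k).length = k := fun k => by
    induction k with
    | zero => simp [hu₀]
    | succ k ih =>
      obtain ⟨n, hn⟩ := hu k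
      simp [hn, ih]
  obtain ⟨y, hy⟩ := exists_seq_of_isPrefix (u := u)
    (fun k => (hu k).elim fun n hn => ⟨[n], hn.symm⟩) fun i j hij => by simpa [hlen] using hij
  refine hxf (mem_iUnion.2 ⟨y, mem_iInter.2 fun k => hΦ _ ?_⟩)
  have hyk : (List.range k).map y = u k := by simpa only [hlen] using hy k
  exact hyk ▸ hΦu k

/-- Marczewski's theorem: a σ-algebra with a σ-ideal of null sets in which every set has a
measurable envelope is closed under the Souslin operation. -/
theorem measurableSet_souslinOp [MeasurableSpace X] {null : Set X → Prop}
    (hmeas : ∀ s, null s → MeasurableSet s) (hmono : ∀ s t, s ⊆ t → null t → null s)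
    (hUnion : ∀ s : ℕ → Set X, (∀ n, null (s n)) → null (⋃ n, s n))
    (henv : ∀ s, ∃ t, MeasurableSet t ∧ s ⊆ t ∧ ∀ u, MeasurableSet u → u ⊆ t \ s → null u)
    (hf : ∀ s, MeasurableSet (f s)) : MeasurableSet (souslinOp f) := by
  choose Ψ hΨ hsub hnull using fun s => henv (souslinSection f s)
  let Φ := fun s => Ψ s ∩ f s
  have hΦ : ∀ s, MeasurableSet (Φ s) := fun s => (hΨ s).inter (hf s)
  have hsubΦ : ∀ s, souslinSection f s ⊆ Φ s := fun s =>
    subset_inter (hsub s) (souslinSection_subset f s)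
  have hgap : ∀ s, null (Φ s \ ⋃ n, Φ (s ++ [n])) := fun s => by
    refine hnull s _ ((hΦ s).diff (.iUnion fun n => hΦ _)) (sdiff_subset_sdiff inter_subset_left ?_)
    exact (souslinSection_subset_iUnion f s).trans (iUnion_mono fun n => hsubΦ (s ++ [n]))
  have hdiff : null (Φ [] \ souslinOp f) := by
    obtain ⟨g, hg⟩ := exists_surjective_nat (List ℕ)
    refine hmono _ _ (diff_souslinOp_subset fun s => inter_subset_right) ?_
    rw [← hg.iUnion_comp]
    exact hUnion _ fun n => hgap (g n)
  have hsub₀ : souslinOp f ⊆ Φ [] := souslinSection_nil f ▸ hsubΦ []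
  rw [← sdiff_sdiff_cancel_left hsub₀]
  exact (hΦ []).diff (hmeas _ hdiff)

end Souslin

namespace IsRamseySpace

variable {S : Set (Setoid ℕ)}

/-- The σ-algebra of Ramsey sets. -/
abbrev measurableSpace (hS : IsRamseySpace S) : MeasurableSpace ↥S where
  MeasurableSet' := IsRamsey S
  measurableSet_empty := isRamseyNull_empty.isRamsey
  measurableSet_compl _ := IsRamsey.compl
  measurableSet_iUnion _ := hS.isRamsey_iUnion

theorem isRamsey_of_souslinMeasurable (hS : IsRamseySpace S) {X : Set ↥S}
    (hX : SouslinMeasurable (ellentuckTop S) X) : IsRamsey S X :=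
  hX {Y | IsRamsey S Y} (fun _ => hS.isRamsey_of_isOpen) (fun _ => IsRamsey.compl)
    (fun _ hY _ hZ => IsRamsey.union hY hZ) fun _ hf =>
      @measurableSet_souslinOp _ _ hS.measurableSpace (IsRamseyNull S)
        (fun _ => IsRamseyNull.isRamsey) (fun _ _ hsub h => h.mono hsub)
        (fun _ => hS.isRamseyNull_iUnion) hS.exists_isRamsey_envelope hf

theorem exists_forall_coarsens_const (hS : IsRamseySpace S) {κ : Type*} [Finite κ] {c : ↥S → κ}
    (hc : ∀ i, SouslinMeasurable (ellentuckTop S) {E | c E = i}) (E : ↥S) :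
    ∃ F : ↥S, Coarsens F.1 E.1 ∧
      ∀ F₁ F₂ : ↥S, Coarsens F₁.1 F.1 → Coarsens F₂.1 F.1 → c F₁ = c F₂ := by
  suffices hcol : ∀ (T : Finset κ) (E : ↥S), (∀ F : ↥S, Coarsens F.1 E.1 → c F ∈ T) →
      ∃ F : ↥S, Coarsens F.1 E.1 ∧ ∃ i, ∀ F' : ↥S, Coarsens F'.1 F.1 → c F' = i by
    have := Fintype.ofFinite κ
    obtain ⟨F, hF, i, hi⟩ := hcol Finset.univ E fun F _ => Finset.mem_univ (c F)
    exact ⟨F, hF, fun F₁ F₂ h₁ h₂ => (hi F₁ h₁).trans (hi F₂ h₂).symm⟩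
  classical
  intro T
  induction T using Finset.induction_on with
  | empty => exact fun E hE => absurd (hE E (.refl _)) (Finset.notMem_empty _)
  | insert i T _ ih =>
    intro E hE
    obtain ⟨A, hA, h⟩ := isRamsey_iff.1 (hS.isRamsey_of_souslinMeasurable (hc i)) _ E
      (self_mem_basicSet 0 E)
    rw [approx_zero, ← approx_zero A.1, basicSet_approx_zero] at h
    rcases h with h | h
    · exact ⟨A, hA.1, i, fun F hF => h hF⟩
    · obtain ⟨F, hF, hconst⟩ := ih A fun F hF =>
        (Finset.mem_insert.1 (hE F (hF.trans hA.1))).resolve_left (disjoint_left.1 h hF)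
      exact ⟨F, hF.trans hA.1, hconst⟩

end IsRamseySpace

/-! ### Amalgamation -/

section Amalgam

variable {A B C : Setoid ℕ} {m n : ℕ}

/-- For `A ≤ B` and a minimal representative `N` of `A`, the coarsening of `B` in which the classes
of `B` that start below `N` stay apart and the other ones are glued as in `A`. -/
noncomputable def amalgam (A B : Setoid ℕ) (N : ℕ) : Setoid ℕ :=
  Setoid.ker fun y => if minRep B y < N then minRep B y else minRep A y

theorem amalgam_iff {N x y : ℕ} : amalgam A B N x y ↔
    (if minRep B x < N then minRep B x else minRep A x) =
      if minRep B y < N then minRep B y else minRep A y := Iff.rfl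

theorem amalgam_coarsens (h : Coarsens A B) (N : ℕ) : Coarsens (amalgam A B N) B :=
  fun x y hxy => by
    have hB : minRep B x = minRep B y := rel_iff_minRep_eq.1 hxy
    have hA : minRep A x = minRep A y := rel_iff_minRep_eq.1 (h x y hxy)
    exact amalgam_iff.2 (by rw [hB, hA])

theorem amalgam_iff_of_lt {N x y : ℕ} (hx : x < N) (hy : y < N) : amalgam A B N x y ↔ B x y := by
  rw [amalgam_iff, if_pos ((minRep_le B x).trans_lt hx),
    if_pos ((minRep_le B y).trans_lt hy), rel_iff_minRep_eq]

theorem minReps_amalgam (h : Coarsens A B) (N : ℕ) :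
    minReps (amalgam A B N) = (minReps B ∩ Iio N) ∪ (minReps A ∩ Ici N) := by
  have hAB : ∀ x ∈ minReps A, minRep B x = x := fun x hx =>
    minRep_eq_self_iff.2 (h.minReps_subset hx)
  have hfix : ∀ y, minRep B (minRep B y) = minRep B y := fun y =>
    minRep_eq_self_iff.2 (minRep_mem_minReps B y)
  rw [amalgam, minReps_ker (fun y => ?_) fun y => ?_]
  · ext y
    simp only [Function.mem_fixedPoints, Function.IsFixedPt, mem_union, mem_inter_iff, mem_Iio,
      mem_Ici]
    grind [minRep_eq_self_iff, minRep_le]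
  · split_ifs
    exacts [minRep_le B y, minRep_le A y]
  · have := minRep_eq_self_iff.2 (minRep_mem_minReps A y)
    have := hAB _ (minRep_mem_minReps A y)
    grind

theorem minReps_amalgam_infinite (h : Coarsens A B) (hA : (minReps A).Infinite) (N : ℕ) :
    (minReps (amalgam A B N)).Infinite := by
  have hinf : (minReps A \ Iio N).Infinite := hA.sdiff (finite_Iio N)
  rw [minReps_amalgam h]
  exact hinf.mono fun x hx => .inr ⟨hx.1, not_lt.1 fun hlt => hx.2 (mem_Iio.2 hlt)⟩

theorem pRep_amalgam (h : Coarsens A B) (hA : (minReps A).Infinite) (hB : (minReps B).Infinite)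
    (hN : pRep A m = pRep B n) (k : ℕ) :
    pRep (amalgam A B (pRep B n)) k = if k < n then pRep B k else pRep A (m + (k - n)) := by
  refine congrFun (pRep_eq_of_strictMono
    (e := fun k => if k < n then pRep B k else pRep A (m + (k - n))) (fun i k hik => ?_) ?_) k
  · have hAle : pRep A m ≤ pRep A (m + (k - n)) := (pRep_strictMono hA).monotone (by lia)
    dsimp only
    split_ifs with hi hk hk
    · exact pRep_strictMono hB hik
    · exact (pRep_strictMono hB hi).trans_le (hN ▸ hAle)
    · lia
    · exact pRep_strictMono hA (by lia)
  · rw [minReps_amalgam h, ← range_pRep hA, ← range_pRep hB]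
    apply Subset.antisymm
    · rintro _ ⟨k, rfl⟩
      dsimp only
      split_ifs with hk
      · exact .inl ⟨⟨k, rfl⟩, pRep_strictMono hB hk⟩
      · exact .inr ⟨⟨_, rfl⟩, hN ▸ (pRep_strictMono hA).monotone (Nat.le_add_right m _)⟩
    · rintro _ (⟨⟨k, rfl⟩, hk⟩ | ⟨⟨k, rfl⟩, hk⟩)
      · exact ⟨k, if_pos ((pRep_strictMono hB).lt_iff_lt.1 hk)⟩
      · have hmk : m ≤ k := (pRep_strictMono hA).le_iff_le.1 (hN.trans_le hk)
        refine ⟨n + (k - m), ?_⟩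
        simp [hmk]

theorem approx_amalgam (h : Coarsens A B) (hA : (minReps A).Infinite)
    (hB : (minReps B).Infinite) (hN : pRep A m = pRep B n) :
    approx n (amalgam A B (pRep B n)) = approx n B := by
  have hn : pRep (amalgam A B (pRep B n)) n = pRep B n := by simp [pRep_amalgam h hA hB hN, hN]
  exact approx_eq_iff.2 ⟨hn, fun x hx y hy => amalgam_iff_of_lt (hn ▸ hx) (hn ▸ hy)⟩

theorem Coarsens.of_amalgam {N : ℕ} (h : Coarsens A B) (hC : Coarsens C (amalgam A B N))
    (hCA : ∀ x < N, ∀ y < N, (C x y ↔ A x y)) : Coarsens C A := by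
  have hminRep : ∀ x, C x (minRep A x) := fun x => by
    have hBB : minRep B (minRep B x) = minRep B x :=
      minRep_eq_self_iff.2 (minRep_mem_minReps B x)
    have hBA : minRep B (minRep A x) = minRep A x :=
      minRep_eq_self_iff.2 (h.minReps_subset (minRep_mem_minReps A x))
    have hAA : minRep A (minRep A x) = minRep A x :=
      minRep_eq_self_iff.2 (minRep_mem_minReps A x)
    by_cases hx : minRep B x < N
    · have hCx : C x (minRep B x) := hC _ _ (amalgam_iff.2 (by simp [hx, hBB]))
      have hA : A x (minRep B x) := h _ _ (rel_minRep B x)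
      have hlt : minRep A x < N := (minRep_le_of_rel hA).trans_lt hx
      exact C.trans' hCx ((hCA _ hx _ hlt).2 (A.trans' (A.symm' hA) (rel_minRep A x)))
    · exact hC _ _ (amalgam_iff.2 (by simp [hx, hBA, hAA]))
  intro x y hxy
  exact C.trans' (hminRep x) (rel_iff_minRep_eq.1 hxy ▸ C.symm' (hminRep y))

end Amalgam

/-! ### Coarsenings coded by sequences of words -/

section BlockMap

variable {n l : ℕ}

theorem add_block_lt {q m : ℕ} {s : Fin l} : n + (q * l + s) < n + m * l ↔ q < m := by
  rw [Nat.add_lt_add_iff_left]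
  refine ⟨fun h => lt_of_mul_lt_mul_right (by lia : q * l < m * l) l.zero_le, fun h => ?_⟩
  calc q * l + s < (q + 1) * l := by have := s.2; lia
    _ ≤ m * l := Nat.mul_le_mul_right l h

/-- The indices `k ≥ n` are cut into consecutive blocks of length `l`, and `Y q` tells what happens
to the `q`-th block: a letter `a : Fin l → Fin n` sends its `s`-th element to `a s`, whereas
`Sum.inr r` moves it onto the `r`-th block. The indices below `n` stay fixed. -/
def blockMap (n l : ℕ) [NeZero l] (Y : ℕ → (Fin l → Fin n) ⊕ ℕ) (k : ℕ) : ℕ :=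
  if k < n then k else
    Sum.elim (fun a => (a (Fin.ofNat l (k - n)) : ℕ)) (fun r => n + (r * l + (k - n) % l))
      (Y ((k - n) / l))

theorem lt_or_exists_eq_block (n l : ℕ) [NeZero l] (k : ℕ) :
    k < n ∨ ∃ (q : ℕ) (s : Fin l), k = n + (q * l + s) := by
  refine (lt_or_ge k n).imp_right fun hk => ⟨(k - n) / l, Fin.ofNat l (k - n), ?_⟩
  rw [Fin.val_ofNat, Nat.div_add_mod']
  lia

variable [NeZero l] {Y Y' : ℕ → (Fin l → Fin n) ⊕ ℕ}

theorem blockMap_of_lt {k : ℕ} (hk : k < n) : blockMap n l Y k = k := if_pos hk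

theorem blockMap_block (q : ℕ) (s : Fin l) : blockMap n l Y (n + (q * l + s)) =
    Sum.elim (fun a => (a s : ℕ)) (fun r => n + (r * l + s)) (Y q) := by
  have hdiv : (q * l + s) / l = q := by
    rw [Nat.add_comm, Nat.add_mul_div_right _ _ (NeZero.pos l), Nat.div_eq_of_lt s.2, zero_add]
  have hmod : (q * l + s) % l = s := by
    rw [Nat.add_comm, Nat.add_mul_mod_self_right, Nat.mod_eq_of_lt s.2]
  have hs : Fin.ofNat l (q * l + s) = s := Fin.ext hmod
  rw [blockMap, if_neg (by lia), Nat.add_sub_cancel_left, hdiv, hmod, hs]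

theorem blockMap_congr {m k : ℕ} (hY : ∀ q < m, Y q = Y' q) (hk : k < n + m * l) :
    blockMap n l Y k = blockMap n l Y' k := by
  rcases lt_or_exists_eq_block n l k with hkn | ⟨q, s, rfl⟩
  · rw [blockMap_of_lt hkn, blockMap_of_lt hkn]
  · rw [blockMap_block, blockMap_block, hY q (add_block_lt.1 hk)]

theorem blockMap_le (hY : ∀ q r, Y q = Sum.inr r → r ≤ q) (k : ℕ) : blockMap n l Y k ≤ k := by
  rcases lt_or_exists_eq_block n l k with hk | ⟨q, s, rfl⟩
  · exact (blockMap_of_lt hk).le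
  rw [blockMap_block]
  rcases hq : Y q with a | r
  · exact (a s).2.le.trans (Nat.le_add_right n _)
  · have : r * l ≤ q * l := Nat.mul_le_mul_right l (hY q r hq)
    simpa using this

theorem blockMap_blockMap (hY : ∀ q r, Y q = Sum.inr r → Y r = Sum.inr r) (k : ℕ) :
    blockMap n l Y (blockMap n l Y k) = blockMap n l Y k := by
  rcases lt_or_exists_eq_block n l k with hk | ⟨q, s, rfl⟩
  · rw [blockMap_of_lt hk, blockMap_of_lt hk]
  rw [blockMap_block]
  rcases hq : Y q with a | r
  · exact blockMap_of_lt (a s).2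
  · simp only [Sum.elim_inr, blockMap_block, hY q r hq]

theorem fixedPoints_blockMap {d : ℕ → ℕ} (hd : ∀ q, Y q = Sum.inr q ↔ q ∈ range d) :
    Function.fixedPoints (blockMap n l Y) = range (blockMap n l (Sum.inr ∘ d)) := by
  ext k
  constructor
  · intro hk
    rcases lt_or_exists_eq_block n l k with hkn | ⟨q, s, rfl⟩
    · exact ⟨k, blockMap_of_lt hkn⟩
    have hk' : blockMap n l Y (n + (q * l + s)) = n + (q * l + s) := hk
    rw [blockMap_block] at hk'
    rcases hq : Y q with a | r
    · have := (a s).2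
      simp only [hq, Sum.elim_inl] at hk'
      lia
    · have hrq : r = q := by simpa [hq, NeZero.ne l] using hk'
      obtain ⟨i, rfl⟩ := (hd q).1 (hrq ▸ hq)
      exact ⟨n + (i * l + s), blockMap_block i s⟩
  · rintro ⟨k, rfl⟩
    rcases lt_or_exists_eq_block n l k with hk | ⟨i, s, rfl⟩
    · rw [blockMap_of_lt hk]
      exact blockMap_of_lt hk
    · simp [Function.mem_fixedPoints, Function.IsFixedPt, blockMap_block, (hd (d i)).2 ⟨i, rfl⟩]

theorem blockMap_inr_modEq (d : ℕ → ℕ) (k : ℕ) :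
    blockMap n l (Sum.inr ∘ d) k ≡ k [MOD l] := by
  rcases lt_or_exists_eq_block n l k with hk | ⟨q, s, rfl⟩
  · rw [blockMap_of_lt hk]
  · simp [blockMap_block, Nat.ModEq, Nat.add_mod]

theorem blockMap_inr_strictMono {d : ℕ → ℕ} (hd : StrictMono d) :
    StrictMono (blockMap n l (Sum.inr ∘ d)) := by
  intro k k' hkk'
  rcases lt_or_exists_eq_block n l k' with hk' | ⟨q', s', rfl⟩
  · rwa [blockMap_of_lt (hkk'.trans hk'), blockMap_of_lt hk']
  rcases lt_or_exists_eq_block n l k with hk | ⟨q, s, rfl⟩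
  · rw [blockMap_of_lt hk, blockMap_block]
    exact hk.trans_le (Nat.le_add_right n _)
  simp only [blockMap_block, Function.comp_apply, Sum.elim_inr]
  rcases lt_trichotomy q q' with hq | rfl | hq
  · exact (add_block_lt.2 (hd hq)).trans_le (by lia)
  · lia
  · have := (add_block_lt (n := n) (s := s')).2 hq
    lia

/-- A map that is constant on the fibres of `blockMap n l Y` is itself given by words as far as it
takes values below `n`: the blocks `r` are replaced by letters `σ r`. -/
theorem exists_blockMap_elim_eq [NeZero n] {c : ℕ → ℕ} {m : ℕ}
    (hc : ∀ k, c (blockMap n l Y k) = c k) (hid : ∀ k < n, c k = k)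
    (hlt : ∀ k < n + m * l, c k < n) : ∃ σ : ℕ → Fin l → Fin n,
      ∀ k < n + m * l, blockMap n l (Sum.inl ∘ Sum.elim id σ ∘ Y) k = c k := by
  refine ⟨fun r s => Fin.ofNat n (c (n + (r * l + s))), fun k hk => ?_⟩
  rcases lt_or_exists_eq_block n l k with hkn | ⟨q, s, rfl⟩
  · rw [blockMap_of_lt hkn, hid k hkn]
  have hck := hc (n + (q * l + s))
  have hlts := hlt _ hk
  rw [blockMap_block] at hck ⊢
  rcases hq : Y q with a | r
  · simpa [hq, hid _ (a s).2] using hck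
  · have hr : c (n + (r * l + s)) = c (n + (q * l + s)) := by simpa [hq] using hck
    simpa [hq, hr] using Nat.mod_eq_of_lt hlts

end BlockMap

section Glue

variable {B : Setoid ℕ} {h : ℕ → ℕ}

/-- The coarsening of `B` that glues the `i`-th class of `B` to the `h i`-th one. -/
noncomputable def glue (B : Setoid ℕ) (h : ℕ → ℕ) : Setoid ℕ := Setoid.ker (h ∘ classIndex B)

theorem glue_iff {x y : ℕ} : glue B h x y ↔ h (classIndex B x) = h (classIndex B y) := Iff.rfl

theorem glue_coarsens (B : Setoid ℕ) (h : ℕ → ℕ) : Coarsens (glue B h) B := fun _ _ hxy =>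
  congrArg h (rel_iff_classIndex_eq.1 hxy)

theorem approx_glue {j : ℕ} (hB : (minReps B).Infinite) (hh : ∀ i < j, h i = i)
    (hj : pRep (glue B h) j = pRep B j) : approx j (glue B h) = approx j B := by
  refine approx_eq_iff.2 ⟨hj, fun x hx y hy => ?_⟩
  rw [glue_iff, hh _ (classIndex_lt hB (hj ▸ hx)), hh _ (classIndex_lt hB (hj ▸ hy))]
  exact rel_iff_classIndex_eq.symm

theorem pRep_glue (hB : (minReps B).Infinite) (hle : ∀ i, h i ≤ i) (hidem : ∀ i, h (h i) = h i)
    {e : ℕ → ℕ} (he : StrictMono e) (hfix : Function.fixedPoints h = range e) (k : ℕ) :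
    pRep (glue B h) k = pRep B (e k) := by
  have hker : glue B h = Setoid.ker fun x => pRep B (h (classIndex B x)) := Setoid.ext fun x y =>
    glue_iff.trans (pRep_strictMono hB).injective.eq_iff.symm
  refine congrFun (pRep_eq_of_strictMono ((pRep_strictMono hB).comp he) ?_) k
  rw [hker, minReps_ker (fun x => ?_) fun x => by rw [classIndex_pRep hB, hidem],
    range_comp, ← hfix]
  · ext x
    constructor
    · rintro ⟨i, hi, rfl⟩
      simp [Function.mem_fixedPoints, Function.IsFixedPt, classIndex_pRep hB, hi.eq]
    · intro hx
      refine ⟨_, hidem _, hx⟩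
  · exact ((pRep_strictMono hB).monotone (hle _)).trans (pRep_classIndex_le B x)

end Glue

section BlockGluing

variable {α : Type*} {d : ℕ → ℕ} {Y : ℕ → α ⊕ ℕ} {q r : ℕ}

/-- The sequences `Y` that make `blockMap n l Y` a regressive projection: the surviving blocks are
the `d k`, and `Y` only moves blocks onto earlier surviving ones. -/
structure IsBlockGluing (d : ℕ → ℕ) (Y : ℕ → α ⊕ ℕ) : Prop where
  strictMono : StrictMono d
  apply_eq (k : ℕ) : Y (d k) = Sum.inr (d k)
  le {q r : ℕ} : Y q = Sum.inr r → r ≤ q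
  mem_range {q r : ℕ} : Y q = Sum.inr r → r ∈ range d

theorem IsBlockGluing.apply_of_eq_inr (hY : IsBlockGluing d Y) (h : Y q = Sum.inr r) :
    Y r = Sum.inr r := by
  obtain ⟨k, rfl⟩ := hY.mem_range h
  exact hY.apply_eq k

theorem IsBlockGluing.eq_inr_self_iff (hY : IsBlockGluing d Y) :
    Y q = Sum.inr q ↔ q ∈ range d := by
  refine ⟨hY.mem_range, ?_⟩
  rintro ⟨k, rfl⟩
  exact hY.apply_eq k

theorem isBlockGluing_map_comp {Z : ℕ → α ⊕ ℕ} (hd : StrictMono d)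
    (hZ : ∀ k, Z (d k) = Sum.inr k) (hlt : ∀ k, ∀ i < d k, ∀ j, Z i = Sum.inr j → j < k) :
    IsBlockGluing d (Sum.map id d ∘ Z) := by
  have hinr : ∀ {q r}, (Sum.map id d ∘ Z) q = Sum.inr r → ∃ k, Z q = Sum.inr k ∧ d k = r :=
    fun {q r} h => by
      rcases hq : Z q with a | k
      · simp [hq] at h
      · exact ⟨k, rfl, by simpa [hq] using h⟩
  refine ⟨hd, fun k => by simp [hZ], fun {q r} h => ?_, fun h => (hinr h).imp fun _ => And.right⟩
  obtain ⟨k, hk, rfl⟩ := hinr h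
  exact not_lt.1 fun hq => (hlt k q hq k hk).false

end BlockGluing

section WordApprox

variable {B C : Setoid ℕ} {n l : ℕ} [NeZero l]

/-- The approximation obtained from `B` by cutting off at `pRep B (n + W.length * l)` and gluing
the classes with index at least `n` to earlier ones as prescribed by the word `W`. -/
def wordApprox (B : Setoid ℕ) (n l : ℕ) [NeZero l] (W : List (Fin l → Fin n)) : Set (ℕ × ℕ) :=
  {q | q.1 < pRep B (n + W.length * l) ∧ q.2 < pRep B (n + W.length * l) ∧
    glue B (blockMap n l fun i => (W.map Sum.inl).getD i (Sum.inr i)) q.1 q.2}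

theorem approx_eq_wordApprox (hB : (minReps B).Infinite) (hC : Coarsens C B) {m : ℕ}
    (hn : pRep C n = pRep B (n + m * l)) {a : ℕ → Fin l → Fin n}
    (ha : ∀ k < n + m * l, blockMap n l (Sum.inl ∘ a) k = classIndex C (pRep B k)) :
    approx n C = wordApprox B n l ((List.range m).map a) := by
  have hblock : ∀ x < pRep B (n + m * l), blockMap n l
      (fun i => (((List.range m).map a).map Sum.inl).getD i (Sum.inr i)) (classIndex B x) =
        classIndex C x := fun x hx => by
    have hlt := classIndex_lt hB hx
    have hx : classIndex C (pRep B (classIndex B x)) = classIndex C x :=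
      (rel_iff_classIndex_eq.1 (hC _ _ (rel_pRep_classIndex B x))).symm
    rw [← hx, ← ha _ hlt]
    exact blockMap_congr (fun q hq => by simp [hq]) hlt
  ext ⟨x, y⟩
  simp only [approx, wordApprox, mem_ofPred_eq, hn, List.length_map, List.length_range]
  refine and_congr_right fun hx => and_congr_right fun hy => ?_
  rw [glue_iff, hblock x hx, hblock y hy, rel_iff_classIndex_eq]

/-- Restricted to the blocks below `m`, the gluing of the classes of `B` that leads to `C` consists
of the gluing by `Y` followed by a substitution of letters for the surviving blocks. -/
theorem exists_approx_eq_wordApprox [NeZero n] {Y : ℕ → (Fin l → Fin n) ⊕ ℕ} {m : ℕ}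
    (hY : ∀ q r, Y q = Sum.inr r → Y r = Sum.inr r) (hB : (minReps B).Infinite)
    (hC : (minReps C).Infinite) (hCY : Coarsens C (glue B (blockMap n l Y)))
    (hlt : ∀ k < n, pRep C k = pRep B k) (hn : pRep C n = pRep B (n + m * l)) :
    ∃ σ : ℕ → Fin l → Fin n,
      approx n C = wordApprox B n l ((List.range m).map (Sum.elim id σ ∘ Y)) := by
  let c : ℕ → ℕ := fun k => classIndex C (pRep B k)
  have hc : ∀ k, c (blockMap n l Y k) = c k := fun k => by
    refine rel_iff_classIndex_eq.1 (hCY _ _ ?_)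
    rw [glue_iff, classIndex_pRep hB, classIndex_pRep hB, blockMap_blockMap hY]
  have hid : ∀ k < n, c k = k := fun k hk =>
    (congrArg (classIndex C) (hlt k hk)).symm.trans (classIndex_pRep hC k)
  have hcn : ∀ k < n + m * l, c k < n := fun k hk =>
    classIndex_lt hC (hn ▸ pRep_strictMono hB hk)
  exact (exists_blockMap_elim_eq hc hid hcn).imp fun σ hσ =>
    approx_eq_wordApprox hB (hCY.trans (glue_coarsens B _)) hn hσ

end WordApprox

/-! ### Alternating equivalence relations -/

section EPalt

variable {l : ℕ} {hl : 0 < l} {P : Fin l → Set ℕ} {A B C : Setoid ℕ} {m n : ℕ}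

theorem minReps_infinite_of_mem_EPalt (hA : A ∈ EPalt l hl P) : (minReps A).Infinite :=
  minReps_infinite_iff.2 hA.1

theorem mem_EPalt_of_forall_exists (hA : (minReps A).Infinite)
    (h : ∀ k, ∃ E ∈ EPalt l hl P, ∃ i, i ≡ k [MOD l] ∧ pRep A k = pRep E i) :
    A ∈ EPalt l hl P := by
  refine ⟨minReps_infinite_iff.1 hA, fun k => ?_⟩
  obtain ⟨E, hE, i, hik, hpRep⟩ := h k
  have hmod : (⟨i % l, Nat.mod_lt i hl⟩ : Fin l) = ⟨k % l, Nat.mod_lt k hl⟩ := Fin.ext hik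
  exact hpRep ▸ hmod ▸ hE.2 i

theorem modEq_of_pRep_eq (hP : Pairwise (Function.onFun Disjoint P))
    (hA : A ∈ EPalt l hl P) (hB : B ∈ EPalt l hl P) (h : pRep A m = pRep B n) :
    m ≡ n [MOD l] := by
  by_contra hmn
  have hne : (⟨m % l, Nat.mod_lt m hl⟩ : Fin l) ≠ ⟨n % l, Nat.mod_lt n hl⟩ :=
    fun heq => hmn (congrArg Fin.val heq)
  exact disjoint_left.1 (hP hne) (hA.2 m) (h ▸ hB.2 n)

theorem amalgam_mem_EPalt (hP : Pairwise (Function.onFun Disjoint P))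
    (hA : A ∈ EPalt l hl P) (hB : B ∈ EPalt l hl P) (h : Coarsens A B)
    (hN : pRep A m = pRep B n) : amalgam A B (pRep B n) ∈ EPalt l hl P := by
  have hA' := minReps_infinite_of_mem_EPalt hA
  have hB' := minReps_infinite_of_mem_EPalt hB
  refine mem_EPalt_of_forall_exists (minReps_amalgam_infinite h hA' _) fun k => ?_
  rw [pRep_amalgam h hA' hB' hN]
  split_ifs with hk
  · exact ⟨B, hB, k, rfl, rfl⟩
  · have hmod : m + (k - n) ≡ n + (k - n) [MOD l] :=
      (modEq_of_pRep_eq hP hA hB hN).add_right (k - n)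
    rw [Nat.add_sub_cancel' (not_lt.1 hk)] at hmod
    exact ⟨A, hA, _, hmod, rfl⟩

theorem basicSet_amalgam_subset {A B A' : ↥(EPalt l hl P)} (h : Coarsens A.1 B.1)
    (hA' : A'.1 = amalgam A.1 B.1 (pRep A.1 m)) :
    basicSet (EPalt l hl P) (approx m A.1) A' ⊆ basicSet (EPalt l hl P) (approx m A.1) A := by
  rintro C ⟨hCA', k, hk⟩
  obtain ⟨hpRep, hrel⟩ := approx_eq_iff.1 hk
  exact ⟨h.of_amalgam (hA' ▸ hCA') (hpRep ▸ hrel), k, hk⟩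

theorem exists_pRep_succ_eq (hP : Pairwise (Function.onFun Disjoint P))
    (hA : A ∈ EPalt l hl P) (hC : C ∈ EPalt l hl P) (h : Coarsens C A)
    (hn : pRep C n = pRep A n) : ∃ k, pRep C (n + 1) = pRep A (n + 1 + k * l) := by
  have hC' := minReps_infinite_of_mem_EPalt hC
  obtain ⟨i, hi⟩ := h.exists_pRep_eq_add (minReps_infinite_of_mem_EPalt hA) hC' hn n.le_succ
  have hi0 : i ≠ 0 := by
    rintro rfl
    exact (pRep_strictMono hC' n.lt_succ_self).ne (hn.trans hi.symm)
  have hmod : n + 1 ≡ n + i [MOD l] := modEq_of_pRep_eq hP hC hA hi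
  obtain ⟨k, hk⟩ := (Nat.modEq_iff_dvd' (by lia)).1 hmod
  exact ⟨k, by rw [hi, Nat.mul_comm k, ← hk]; congr 1; lia⟩

section Pigeonhole

variable [NeZero l] {Y : ℕ → (Fin l → Fin n) ⊕ ℕ} {d : ℕ → ℕ}

theorem pRep_glue_blockMap (hB : (minReps B).Infinite) (hY : IsBlockGluing d Y) (k : ℕ) :
    pRep (glue B (blockMap n l Y)) k = pRep B (blockMap n l (Sum.inr ∘ d) k) :=
  pRep_glue hB (blockMap_le fun _ _ => hY.le) (blockMap_blockMap fun _ _ => hY.apply_of_eq_inr)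
    (blockMap_inr_strictMono hY.strictMono) (fixedPoints_blockMap fun _ => hY.eq_inr_self_iff) k

theorem glue_blockMap_mem_EPalt (hB : B ∈ EPalt l hl P) (hY : IsBlockGluing d Y) :
    glue B (blockMap n l Y) ∈ EPalt l hl P := by
  have hB' := minReps_infinite_of_mem_EPalt hB
  have hpRep := pRep_glue_blockMap hB' hY
  refine mem_EPalt_of_forall_exists (minReps_infinite_of_strictMono_pRep ?_) fun k =>
    ⟨B, hB, _, blockMap_inr_modEq d k, hpRep k⟩
  rw [funext hpRep]
  exact (pRep_strictMono hB').comp (blockMap_inr_strictMono hY.strictMono)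

variable {j : ℕ}

theorem pRep_glue_blockMap_of_lt (hB : (minReps B).Infinite) (hY : IsBlockGluing d Y)
    (hj : j < n) : pRep (glue B (blockMap n l Y)) j = pRep B j := by
  rw [pRep_glue_blockMap hB hY, blockMap_of_lt hj]

theorem exists_approx_succ_eq_wordApprox {Y : ℕ → (Fin l → Fin (j + 1)) ⊕ ℕ}
    (hP : Pairwise (Function.onFun Disjoint P)) (hB : B ∈ EPalt l hl P)
    (hC : C ∈ EPalt l hl P) (hY : IsBlockGluing d Y)
    (hCY : Coarsens C (glue B (blockMap (j + 1) l Y))) (hCB : approx j C = approx j B) :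
    ∃ (m : ℕ) (σ : ℕ → Fin l → Fin (j + 1)), approx (j + 1) C =
      wordApprox B (j + 1) l ((List.range (d m)).map (Sum.elim id σ ∘ Y)) := by
  have hB' := minReps_infinite_of_mem_EPalt hB
  have hj : pRep C j = pRep B j := (approx_eq_iff.1 hCB).1
  obtain ⟨m, hm⟩ := exists_pRep_succ_eq hP (glue_blockMap_mem_EPalt hB hY) hC hCY
    (hj.trans (pRep_glue_blockMap_of_lt hB' hY j.lt_succ_self).symm)
  refine ⟨m, exists_approx_eq_wordApprox (fun _ _ => hY.apply_of_eq_inr) hB'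
    (minReps_infinite_of_mem_EPalt hC) hCY (fun k hk => ?_) ?_⟩
  · rcases Nat.lt_succ_iff_lt_or_eq.1 hk with hk | rfl
    exacts [pRep_eq_of_approx_eq_of_lt hB' hCB.symm hk, hj]
  · have hblock : blockMap (j + 1) l (Sum.inr ∘ d) (j + 1 + (m * l + (0 : Fin l))) =
        j + 1 + (d m * l + (0 : Fin l)) := blockMap_block m 0
    rw [hm, pRep_glue_blockMap hB' hY]
    exact congrArg (pRep B) (by simpa using hblock)

/-- The pigeonhole principle: over `B`, the approximations of length `j + 1` that extend
`approx j B` are coded by words over `Fin l → Fin (j + 1)`, which the Carlson–Simpson theorem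
homogenizes. -/
theorem exists_forall_approx_succ_mem_or_notMem (hP : Pairwise (Function.onFun Disjoint P))
    (B : ↥(EPalt l hl P)) (j : ℕ) (O : Set (Set (ℕ × ℕ))) :
    ∃ A ∈ basicSet (EPalt l hl P) (approx j B.1) B,
      (∀ C ∈ basicSet (EPalt l hl P) (approx j B.1) A, approx (j + 1) C.1 ∈ O) ∨
        ∀ C ∈ basicSet (EPalt l hl P) (approx j B.1) A, approx (j + 1) C.1 ∉ O := by
  have hB := minReps_infinite_of_mem_EPalt B.2
  obtain ⟨W, d, Z, hW, hd, hZd, hZlt, hZW⟩ :=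
    carlson_simpson {w : List (Fin l → Fin (j + 1)) | wordApprox B.1 (j + 1) l w ∈ O}
  have hY : IsBlockGluing d (Sum.map id d ∘ Z) := isBlockGluing_map_comp hd hZd hZlt
  let A : ↥(EPalt l hl P) :=
    ⟨glue B.1 (blockMap (j + 1) l (Sum.map id d ∘ Z)), glue_blockMap_mem_EPalt B.2 hY⟩
  have hA : approx j A.1 = approx j B.1 :=
    approx_glue hB (fun i hi => blockMap_of_lt (hi.trans j.lt_succ_self))
      (pRep_glue_blockMap_of_lt hB hY j.lt_succ_self)
  have hmem : ∀ C ∈ basicSet (EPalt l hl P) (approx j B.1) A,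
      ∃ w ∈ W, approx (j + 1) C.1 = wordApprox B.1 (j + 1) l w := by
    rintro C ⟨hCA, i, hi⟩
    obtain rfl := length_eq_of_approx_eq (minReps_infinite_of_mem_EPalt C.2) hB hi
    obtain ⟨m, σ, h⟩ := exists_approx_succ_eq_wordApprox hP B.2 C.2 hY hCA hi
    rw [← Function.comp_assoc, Sum.elim_comp_map] at h
    exact ⟨_, hZW m (σ ∘ d), h⟩
  refine ⟨A, ⟨glue_coarsens _ _, j, hA⟩, hW.imp ?_ ?_⟩ <;>
  · rintro rfl C hC
    obtain ⟨w, hw, h⟩ := hmem C hC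
    exact h ▸ hw

end Pigeonhole

theorem isRamseySpace_EPalt (hP : Pairwise (Function.onFun Disjoint P)) :
    IsRamseySpace (EPalt l hl P) where
  minReps_infinite _ := minReps_infinite_of_mem_EPalt
  mem_of_approx A hA h := mem_EPalt_of_forall_exists hA fun k =>
    (h k).imp fun _ ⟨hE, hk⟩ => ⟨hE, k, rfl, (approx_eq_iff.1 hk).1⟩
  amalgamation A B m n h hN :=
    ⟨⟨amalgam A.1 B.1 (pRep B.1 n), amalgam_mem_EPalt hP A.2 B.2 h hN⟩, amalgam_coarsens h _,
      approx_amalgam h (minReps_infinite_of_mem_EPalt A.2) (minReps_infinite_of_mem_EPalt B.2) hN,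
      basicSet_amalgam_subset h (by rw [hN])⟩
  pigeonhole :=
    haveI : NeZero l := ⟨hl.ne'⟩
    exists_forall_approx_succ_mem_or_notMem hP

theorem EPaltSouslinColouring_general (hP : Pairwise (Function.onFun Disjoint P))
    {κ : Type*} [Finite κ] (c : ↥(EPalt l hl P) → κ)
    (hc : ∀ i, SouslinMeasurable (ellentuckTop (EPalt l hl P)) {E | c E = i})
    (E : ↥(EPalt l hl P)) :
    ∃ F : ↥(EPalt l hl P), Coarsens F.1 E.1 ∧
      ∀ F₁ F₂ : ↥(EPalt l hl P), Coarsens F₁.1 F.1 → Coarsens F₂.1 F.1 → c F₁ = c F₂ :=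
  (isRamseySpace_EPalt hP).exists_forall_coarsens_const hc E

end EPalt

/-- **Corollary 3.3:** for every finite Souslin measurable colouring of `𝓔^P_∞`
and every `E` in the space, there is a coarsening `F ≤ E` in the space such that
the colouring is constant on `𝓔^P_∞ ↾ F`. -/
theorem EPaltSouslinColouring
    (l : ℕ) (hl : 0 < l) (P : Fin l → Set ℕ)
    (hinf : ∀ i, (P i).Infinite)
    (hdisj : ∀ i j, i ≠ j → Disjoint (P i) (P j))
    (hcov : ⋃ i, P i = Set.univ)
    (hmin : ∀ i j : Fin l, i < j → sInf (P i) < sInf (P j))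
    (m : ℕ) (c : ↥(EPalt l hl P) → Fin m)
    (hc : ∀ i : Fin m, SouslinMeasurable (ellentuckTop (EPalt l hl P)) {E | c E = i})
    (E : ↥(EPalt l hl P)) :
    ∃ F : ↥(EPalt l hl P), Coarsens F.1 E.1 ∧
      ∀ F₁ F₂ : ↥(EPalt l hl P), Coarsens F₁.1 F.1 → Coarsens F₂.1 F.1 → c F₁ = c F₂ :=
  EPaltSouslinColouring_general (fun i j => hdisj i j) c hc E

end DualRamsey
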